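/- arXiv:2005.07997 — 11 statements merged into one kernel-verified Lean document; each statement's English description precedes it below -/
import Mathlib

section
/- Suppose C is a contribution profile such that every agent i with C_i > 0 has at least one acceptable project, and let δ be a Nash distribution for C. Then no distribution dominates δ: there is no δ' ∈ Δ(|C|) with u_i(δ') ≥ u_i(δ) for every agent i with C_i > 0 and u_i(δ') > u_i(δ) for at least one agent i with C_i > 0. -/
/-!
The uniform distribution gives every contributing agent positive utility, because each of them has
an acceptable project; hence the maximal Nash product is positive
(`exists_isDistribution_nashProduct_pos`), and a Nash distribution also gives every contributing
agent positive utility. On positive utilities the Nash product is strictly increasing in the utility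
of each contributing agent and independent of the other agents, so a dominating distribution would
have a strictly larger Nash product.
-/

open Finset

/-- A distribution of value `V`: nonnegative and sums to `V`. -/
def IsDistribution {A : Type*} [Fintype A] (δ : A → ℝ) (V : ℝ) : Prop :=
  (∀ x, 0 ≤ δ x) ∧ ∑ x, δ x = V

/-- Agent's (linear) utility of a distribution. -/
def util {A : Type*} [Fintype A] (u : A → ℝ) (δ : A → ℝ) : ℝ :=
  ∑ x, δ x * u x

/-- The Nash product of a distribution (real exponentiation, `0 ^ 0 = 1`). -/
noncomputable def nashProduct {A N : Type*} [Fintype A] [Fintype N]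
    (u : N → A → ℝ) (C : N → ℝ) (δ : A → ℝ) : ℝ :=
  ∏ i, (util (u i) δ) ^ (C i)

/-- A Nash distribution for contribution profile `C`: a maximizer of the Nash
product over `Δ(|C|)`. -/
def IsNashDistribution {A N : Type*} [Fintype A] [Fintype N]
    (u : N → A → ℝ) (C : N → ℝ) (δ : A → ℝ) : Prop :=
  IsDistribution δ (∑ i, C i) ∧
    ∀ δ' : A → ℝ, IsDistribution δ' (∑ i, C i) →
      nashProduct u C δ' ≤ nashProduct u C δ

theorem util_nonneg {A : Type*} [Fintype A] {u δ : A → ℝ}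
    (hu : ∀ x, 0 ≤ u x) (hδ : ∀ x, 0 ≤ δ x) : 0 ≤ util u δ :=
  Finset.sum_nonneg fun x _ => mul_nonneg (hδ x) (hu x)

/-- Agents with zero contribution enter only through a factor `a ^ 0 = 1`. -/
theorem rpow_pos_of_contributes {a c : ℝ} (hc : 0 ≤ c) (h : 0 < c → 0 < a) : 0 < a ^ c := by
  rcases hc.eq_or_lt with rfl | hc
  · simp
  · exact Real.rpow_pos_of_pos (h hc) _

/-- The witness is the uniform distribution. -/
theorem exists_isDistribution_nashProduct_pos {A N : Type*} [Fintype A] [Nonempty A] [Fintype N]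
    (u : N → A → ℝ) (hu : ∀ i x, 0 ≤ u i x) (C : N → ℝ) (hC : ∀ i, 0 ≤ C i)
    (hacc : ∀ i, 0 < C i → ∃ x, 0 < u i x) :
    ∃ δ : A → ℝ, IsDistribution δ (∑ i, C i) ∧ 0 < nashProduct u C δ := by
  have hcard : (0 : ℝ) < Fintype.card A := by exact_mod_cast Fintype.card_pos
  have hV : 0 ≤ ∑ i, C i := Finset.sum_nonneg fun i _ => hC i
  refine ⟨fun _ => (∑ i, C i) / Fintype.card A, ⟨fun _ => by positivity, ?_⟩, ?_⟩
  · simp only [Finset.sum_const, Finset.card_univ, nsmul_eq_mul]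
    field_simp
  · refine Finset.prod_pos fun i _ => rpow_pos_of_contributes (hC i) fun hi => ?_
    obtain ⟨x, hx⟩ := hacc i hi
    have hVpos : 0 < ∑ i, C i :=
      Finset.sum_pos' (fun i _ => hC i) ⟨i, Finset.mem_univ i, hi⟩
    exact Finset.sum_pos' (fun y _ => mul_nonneg (by positivity) (hu i y))
      ⟨x, Finset.mem_univ x, by positivity⟩

theorem nash_efficient {A N : Type*} [Fintype A] [Nonempty A] [Fintype N]
    (u : N → A → ℝ) (hu : ∀ i x, 0 ≤ u i x)
    (C : N → ℝ) (hC : ∀ i, 0 ≤ C i)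
    (hacc : ∀ i, 0 < C i → ∃ x, 0 < u i x)
    (δ : A → ℝ) (hδ : IsNashDistribution u C δ) :
    ¬ ∃ δ' : A → ℝ, IsDistribution δ' (∑ i, C i) ∧
        (∀ i, 0 < C i → util (u i) δ ≤ util (u i) δ') ∧
        (∃ i, 0 < C i ∧ util (u i) δ < util (u i) δ') := by
  rintro ⟨δ', hδ', hle, j, hj, hlt⟩
  obtain ⟨hδdist, hmax⟩ := hδ
  have hprod : 0 < nashProduct u C δ := by
    obtain ⟨ε, hε, hpos⟩ := exists_isDistribution_nashProduct_pos u hu C hC hacc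
    exact hpos.trans_le (hmax ε hε)
  have hutil : ∀ i, 0 < C i → 0 < util (u i) δ := by
    intro i hi
    refine (util_nonneg (hu i) hδdist.1).lt_of_ne' fun h0 => hprod.ne' ?_
    exact Finset.prod_eq_zero (Finset.mem_univ i) (by rw [h0, Real.zero_rpow hi.ne'])
  refine (hmax δ' hδ').not_gt ?_
  refine Finset.prod_lt_prod (fun i _ => rpow_pos_of_contributes (hC i) (hutil i))
    (fun i _ => ?_) ⟨j, Finset.mem_univ j, Real.rpow_lt_rpow (hutil j hj).le hlt hj⟩
  rcases (hC i).eq_or_lt with h | h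
  · simp [← h]
  · exact Real.rpow_le_rpow (hutil i h).le (hle i h) h.le
end

section
/- Suppose C is a contribution profile with C_i > 0 for all i ∈ N and every agent has at least one acceptable project. If δ and δ' are both Nash distributions for C, then u_i(δ) = u_i(δ') for every agent i ∈ N. -/
/-!
The Nash product is strictly log-concave in the vector of utilities wherever it is positive, so
two maximizers with different utilities would both be beaten by their midpoint.

Logarithms are not needed. If `a i`, `b i` are the utilities under `δ`, `δ'`, the midpoint gives
agent `i` utility `(a i + b i) / 2`, and `a i * b i ≤ ((a i + b i) / 2) ^ 2`, strictly when
`a i ≠ b i`. Raising to the powers `C i > 0` and multiplying over the agents compares the product of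
the two Nash products with the square of that of the midpoint. The strict inequality survives
because all factors are positive: the uniform distribution has positive Nash product
(`nashProduct_uniform_pos`), hence so does every maximizer, and then no agent has utility zero.
-/

open Finset

theorem util_midpoint {A : Type*} [Fintype A] (u δ δ' : A → ℝ) :
    util u (fun x => (δ x + δ' x) / 2) = (util u δ + util u δ') / 2 := by
  unfold util
  rw [← Finset.sum_add_distrib, Finset.sum_div]
  exact Finset.sum_congr rfl fun x _ => by ring

theorem IsDistribution.midpoint {A : Type*} [Fintype A] {δ δ' : A → ℝ} {V : ℝ}
    (h : IsDistribution δ V) (h' : IsDistribution δ' V) :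
    IsDistribution (fun x => (δ x + δ' x) / 2) V := by
  refine ⟨fun x => by linarith [h.1 x, h'.1 x], ?_⟩
  rw [← Finset.sum_div, Finset.sum_add_distrib, h.2, h'.2]
  ring

theorem isDistribution_uniform {A : Type*} [Fintype A] [Nonempty A] {V : ℝ} (hV : 0 ≤ V) :
    IsDistribution (fun _ : A => V / Fintype.card A) V := by
  refine ⟨fun _ => by positivity, ?_⟩
  have hA : (Fintype.card A : ℝ) ≠ 0 := by exact_mod_cast Fintype.card_ne_zero
  rw [Finset.sum_const, Finset.card_univ, nsmul_eq_mul]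
  field_simp

theorem nashProduct_uniform_pos {A N : Type*} [Fintype A] [Nonempty A] [Fintype N]
    {u : N → A → ℝ} (hu : ∀ i x, 0 ≤ u i x) (C : N → ℝ)
    (hacc : ∀ i, ∃ x, 0 < u i x) {V : ℝ} (hV : 0 < V) :
    0 < nashProduct u C (fun _ => V / Fintype.card A) := by
  have hc : 0 < V / (Fintype.card A : ℝ) :=
    div_pos hV (by exact_mod_cast Fintype.card_pos)
  refine Finset.prod_pos fun i _ => Real.rpow_pos_of_pos ?_ _
  obtain ⟨x, hx⟩ := hacc i
  exact Finset.sum_pos' (fun y _ => mul_nonneg hc.le (hu i y))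
    ⟨x, Finset.mem_univ x, mul_pos hc hx⟩

/-- A zero utility with a positive exponent would make the whole product vanish. -/
theorem util_pos_of_nashProduct_pos {A N : Type*} [Fintype A] [Fintype N]
    {u : N → A → ℝ} (hu : ∀ i x, 0 ≤ u i x) {C : N → ℝ} (hC : ∀ i, 0 < C i)
    {δ : A → ℝ} (hδ : ∀ x, 0 ≤ δ x) (h : 0 < nashProduct u C δ) (i : N) :
    0 < util (u i) δ := by
  refine lt_of_le_of_ne (util_nonneg (hu i) hδ) fun h0 => h.ne' ?_
  refine Finset.prod_eq_zero (Finset.mem_univ i) ?_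
  rw [← h0, Real.zero_rpow (hC i).ne']

theorem nash_utilities_unique {A N : Type*} [Fintype A] [Nonempty A] [Fintype N]
    (u : N → A → ℝ) (hu : ∀ i x, 0 ≤ u i x)
    (C : N → ℝ) (hC : ∀ i, 0 < C i)
    (hacc : ∀ i, ∃ x, 0 < u i x)
    (δ δ' : A → ℝ) (hδ : IsNashDistribution u C δ) (hδ' : IsNashDistribution u C δ') :
    ∀ i, util (u i) δ = util (u i) δ' := by
  intro i
  by_contra hne
  have hV : 0 < ∑ j, C j := Finset.sum_pos (fun j _ => hC j) ⟨i, Finset.mem_univ i⟩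
  have hunif := nashProduct_uniform_pos hu C hacc hV
  have hP := hunif.trans_le (hδ.2 _ (isDistribution_uniform hV.le))
  have hP' := hunif.trans_le (hδ'.2 _ (isDistribution_uniform hV.le))
  have ha := util_pos_of_nashProduct_pos hu hC hδ.1.1 hP
  have hb := util_pos_of_nashProduct_pos hu hC hδ'.1.1 hP'
  have hmid := hδ.1.midpoint hδ'.1
  have hm := hδ.2 _ hmid
  have hm' := hδ'.2 _ hmid
  have hlt : nashProduct u C δ * nashProduct u C δ' <
      nashProduct u C (fun x => (δ x + δ' x) / 2) *
        nashProduct u C (fun x => (δ x + δ' x) / 2) := by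
    simp only [nashProduct, util_midpoint, ← Finset.prod_mul_distrib]
    refine Finset.prod_lt_prod
      (fun j _ => mul_pos (Real.rpow_pos_of_pos (ha j) _) (Real.rpow_pos_of_pos (hb j) _))
      (fun j _ => ?_) ⟨i, Finset.mem_univ i, ?_⟩
    · have hs : 0 ≤ (util (u j) δ + util (u j) δ') / 2 := by linarith [ha j, hb j]
      rw [← Real.mul_rpow (ha j).le (hb j).le, ← Real.mul_rpow hs hs]
      refine Real.rpow_le_rpow (mul_pos (ha j) (hb j)).le ?_ (hC j).le
      nlinarith [sq_nonneg (util (u j) δ - util (u j) δ')]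
    · have hs : 0 ≤ (util (u i) δ + util (u i) δ') / 2 := by linarith [ha i, hb i]
      rw [← Real.mul_rpow (ha i).le (hb i).le, ← Real.mul_rpow hs hs]
      refine Real.rpow_lt_rpow (mul_pos (ha i) (hb i)).le ?_ (hC i)
      nlinarith [sq_pos_of_ne_zero (sub_ne_zero.mpr hne)]
  have hm0 : 0 ≤ nashProduct u C (fun x => (δ x + δ' x) / 2) :=
    Finset.prod_nonneg fun j _ => Real.rpow_nonneg (util_nonneg (hu j) hmid.1) _
  exact absurd (mul_le_mul hm hm' hm0 hP.le) (not_le.mpr hlt)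
end

section
/- Suppose C is a contribution profile with C_i > 0 for all i ∈ N, every agent has at least one acceptable project, and utilities are normalized so that min{u_i(x) : x ∈ A, u_i(x) > 0} = 1 for every agent i. If δ is a Nash distribution for C, then for every agent i ∈ N: C_i ≤ u_i(δ) ≤ |C| · max_{x∈A} u_i(x). -/
/-!
A Nash distribution `δ` of the pool `V = |C|` gives every agent positive utility, since the
uniform distribution has a positive Nash product. Moving a fraction `t` of the pool to a single
project `x` replaces each `u_j(δ)` by `u_j(δ) * (1 + t * (a_j - 1))` with
`a_j = V * u_j(x) / u_j(δ)`, and optimality says that this does not increase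
`∑ j, C_j * log u_j`. Letting `t → 0⁺` gives the first-order condition
`∑ j, C_j * u_j(x) / u_j(δ) ≤ 1` (`nash_first_order`). For the lower bound, choose `x` with
`u_i(x) = 1` and keep only the term of agent `i`: `C_i / u_i(δ) ≤ 1`. The upper bound holds for
every distribution.
-/

open Finset

theorem nash_util_pos {A N : Type*} [Fintype A] [Nonempty A] [Fintype N]
    (u : N → A → ℝ) (hu : ∀ i x, 0 ≤ u i x) (C : N → ℝ) (hC : ∀ i, 0 < C i)
    (hacc : ∀ i, ∃ x, 0 < u i x) (δ : A → ℝ) (hδ : IsNashDistribution u C δ) (i : N) :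
    0 < util (u i) δ := by
  have hV : 0 < ∑ j, C j := Finset.sum_pos (fun j _ => hC j) ⟨i, Finset.mem_univ i⟩
  have hcard : (0 : ℝ) < Fintype.card A := by exact_mod_cast Fintype.card_pos
  have hunif : IsDistribution (fun _ : A => (∑ j, C j) / Fintype.card A) (∑ j, C j) := by
    refine ⟨fun _ => by positivity, ?_⟩
    rw [Finset.sum_const, Finset.card_univ, nsmul_eq_mul]
    field_simp
  have hprod : 0 < nashProduct u C δ := by
    refine lt_of_lt_of_le (Finset.prod_pos fun j _ => Real.rpow_pos_of_pos ?_ _) (hδ.2 _ hunif)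
    obtain ⟨x, hx⟩ := hacc j
    exact Finset.sum_pos' (fun y _ => mul_nonneg (by positivity) (hu j y))
      ⟨x, Finset.mem_univ x, by positivity⟩
  have hnn : 0 ≤ util (u i) δ := Finset.sum_nonneg fun y _ => mul_nonneg (hδ.1.1 y) (hu i y)
  refine lt_of_le_of_ne hnn fun h => hprod.ne' ?_
  refine Finset.prod_eq_zero (Finset.mem_univ i) ?_
  rw [← h, Real.zero_rpow (hC i).ne']

/-- First-order optimality condition: the marginal logarithmic Nash welfare of every project is
at most `1`, the common multiplier for a pool of value `∑ j, C j`. -/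
theorem nash_first_order {A N : Type*} [Fintype A] [Nonempty A] [Fintype N] [Nonempty N]
    (u : N → A → ℝ) (hu : ∀ i x, 0 ≤ u i x) (C : N → ℝ) (hC : ∀ i, 0 < C i)
    (hacc : ∀ i, ∃ x, 0 < u i x) (δ : A → ℝ) (hδ : IsNashDistribution u C δ) (x : A) :
    ∑ j, C j * u j x / util (u j) δ ≤ 1 := by
  classical
  have hpos := nash_util_pos u hu C hC hacc δ hδ
  set V := ∑ j, C j with hVdef
  have hV : 0 < V := Finset.sum_pos (fun j _ => hC j) Finset.univ_nonempty
  set a : N → ℝ := fun j => V * u j x / util (u j) δ with ha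
  have ha0 : ∀ j, 0 ≤ a j := fun j =>
    div_nonneg (mul_nonneg hV.le (hu j x)) (hpos j).le
  have key : ∀ t ∈ Set.Ioo (0 : ℝ) 1, ∑ j, C j * ((a j - 1) / (1 + t * (a j - 1))) ≤ 0 := by
    rintro t ⟨ht0, ht1⟩
    have hr : ∀ j, 0 < 1 + t * (a j - 1) := fun j => by
      nlinarith [mul_nonneg ht0.le (ha0 j)]
    have hdist : IsDistribution (fun y => (1 - t) * δ y + if y = x then t * V else 0) V := by
      refine ⟨fun y => ?_, ?_⟩
      · have h1 : 0 ≤ (1 - t) * δ y := mul_nonneg (by linarith) (hδ.1.1 y)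
        have h2 : (0 : ℝ) ≤ if y = x then t * V else 0 := by split_ifs <;> positivity
        exact add_nonneg h1 h2
      · rw [Finset.sum_add_distrib, ← Finset.mul_sum, hδ.1.2]
        simp only [Finset.sum_ite_eq', Finset.mem_univ, if_true]
        ring
    have hutil : ∀ j, util (u j) (fun y => (1 - t) * δ y + if y = x then t * V else 0)
        = util (u j) δ * (1 + t * (a j - 1)) := fun j => by
      have h1 : util (u j) (fun y => (1 - t) * δ y + if y = x then t * V else 0)
          = (1 - t) * util (u j) δ + t * V * u j x := by
        simp [util, add_mul, Finset.sum_add_distrib, Finset.mul_sum, mul_assoc, ite_mul]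
      have h2 := (hpos j).ne'
      rw [h1, ha]
      field_simp
      ring
    have hle := hδ.2 _ hdist
    have hfac : nashProduct u C (fun y => (1 - t) * δ y + if y = x then t * V else 0)
        = nashProduct u C δ * ∏ j, (1 + t * (a j - 1)) ^ C j := by
      unfold nashProduct
      rw [← Finset.prod_mul_distrib]
      refine Finset.prod_congr rfl fun j _ => ?_
      rw [hutil, Real.mul_rpow (hpos j).le (hr j).le]
    have hN : 0 < nashProduct u C δ :=
      Finset.prod_pos fun j _ => Real.rpow_pos_of_pos (hpos j) _
    rw [hfac] at hle
    have hle1 : ∏ j, (1 + t * (a j - 1)) ^ C j ≤ 1 := by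
      by_contra! h
      nlinarith
    have hlog : ∑ j, C j * Real.log (1 + t * (a j - 1)) ≤ 0 := by
      have h := Real.log_nonpos
        (Finset.prod_nonneg fun j _ => (Real.rpow_pos_of_pos (hr j) (C j)).le) hle1
      rw [Real.log_prod fun j _ => (Real.rpow_pos_of_pos (hr j) (C j)).ne'] at h
      simpa only [Real.log_rpow (hr _)] using h
    -- `log r ≥ 1 - 1 / r` with `r = 1 + t * (a j - 1)`
    have hlow : t * ∑ j, C j * ((a j - 1) / (1 + t * (a j - 1))) ≤ 0 := by
      refine le_trans ?_ hlog
      rw [Finset.mul_sum]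
      refine Finset.sum_le_sum fun j _ => ?_
      have h1 := Real.one_sub_inv_le_log_of_pos (hr j)
      have h2 : t * (C j * ((a j - 1) / (1 + t * (a j - 1))))
          = C j * (1 - (1 + t * (a j - 1))⁻¹) := by
        have := (hr j).ne'
        field_simp
        ring
      rw [h2]
      exact mul_le_mul_of_nonneg_left h1 (hC j).le
    by_contra! h
    nlinarith [mul_pos ht0 h]
  have hlim : Filter.Tendsto (fun t : ℝ => ∑ j, C j * ((a j - 1) / (1 + t * (a j - 1))))
      (nhdsWithin 0 (Set.Ioi 0)) (nhds (∑ j, C j * ((a j - 1) / (1 + 0 * (a j - 1))))) := by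
    refine tendsto_nhdsWithin_of_tendsto_nhds ?_
    refine tendsto_finsetSum _ fun j _ => ?_
    have : ContinuousAt (fun t : ℝ => C j * ((a j - 1) / (1 + t * (a j - 1)))) 0 := by
      refine ContinuousAt.mul (by fun_prop) (ContinuousAt.div (by fun_prop) (by fun_prop) ?_)
      simp
    exact this
  have h0 : ∑ j, C j * ((a j - 1) / (1 + 0 * (a j - 1))) ≤ 0 :=
    le_of_tendsto hlim (Filter.mem_of_superset (Ioo_mem_nhdsGT one_pos) key)
  have h1 : ∑ j, C j * ((a j - 1) / (1 + 0 * (a j - 1)))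
      = V * (∑ j, C j * u j x / util (u j) δ) - V := by
    conv_rhs => rw [Finset.mul_sum]
    conv_rhs => enter [2]; rw [hVdef]
    rw [← Finset.sum_sub_distrib]
    refine Finset.sum_congr rfl fun j _ => ?_
    simp only [ha]
    ring
  rw [h1] at h0
  by_contra! h
  nlinarith

theorem nash_utility_bounds {A N : Type*} [Fintype A] [Nonempty A] [Fintype N]
    (u : N → A → ℝ) (hu : ∀ i x, 0 ≤ u i x)
    (C : N → ℝ) (hC : ∀ i, 0 < C i)
    (hacc : ∀ i, ∃ x, 0 < u i x)
    (hnorm : ∀ i, IsLeast {t : ℝ | ∃ x, u i x = t ∧ 0 < t} 1)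
    (δ : A → ℝ) (hδ : IsNashDistribution u C δ) :
    ∀ i, C i ≤ util (u i) δ ∧
      util (u i) δ ≤ (∑ j, C j) * (Finset.univ.sup' Finset.univ_nonempty (u i)) := by
  intro i
  have : Nonempty N := ⟨i⟩
  have hpos := nash_util_pos u hu C hC hacc δ hδ
  refine ⟨?_, ?_⟩
  · obtain ⟨x, hx, -⟩ := (hnorm i).1
    have h1 := nash_first_order u hu C hC hacc δ hδ x
    have h2 : C i * u i x / util (u i) δ ≤ ∑ j, C j * u j x / util (u j) δ :=
      Finset.single_le_sum (f := fun j => C j * u j x / util (u j) δ)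
        (fun j _ => div_nonneg (mul_nonneg (hC j).le (hu j x)) (hpos j).le) (Finset.mem_univ i)
    have h3 := h2.trans h1
    rwa [hx, mul_one, div_le_one (hpos i)] at h3
  · rw [← hδ.1.2, Finset.sum_mul]
    exact Finset.sum_le_sum fun y _ =>
      mul_le_mul_of_nonneg_left (Finset.le_sup' (u i) (Finset.mem_univ y)) (hδ.1.1 y)
end

section
/- Suppose C is a contribution profile with C_i > 0 for all i ∈ N and every agent has at least one acceptable project. Let δ⁰ ∈ Δ(|C|) satisfy δ⁰(x) > 0 for all x ∈ A, and define the sequence (δ^k) by δ^{k+1}(x) = Σ_{i∈N} C_i · (u_i(x)/u_i(δ^k)) · δ^k(x) for all x ∈ A. Then the sequence of Nash products ∏_{i∈N} (u_i(δ^k))^{C_i} converges, as k → ∞, to the maximum of the Nash product over Δ(|C|). -/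
/-!
The iteration is a multiplicative update `δ (k+1) x = r x (δ k) * δ k x`, where
`r x δ = ∑ i, C i * u i x / util (u i) δ`. Let `d` be a maximizer of the Nash product, which exists
by compactness. First-order optimality gives `r x d ≤ 1` for all `x`
(`gradient_le_one`), hence `r x d = 1` on the support of `d` (`gradient_eq_one`). For such `x` the
numbers `C i * u i x / util (u i) d` are convex weights, and Jensen's inequality for `log` yields

  `∑ i, C i * (log (util (u i) d) - log (util (u i) (δ k))) ≤ ∑ x, d x * log (r x (δ k))`

(`log_gap_le`). The right side is the increment at step `k` of the cross entropy
`Φ k = ∑ x, d x * log (δ k x)`, which is bounded above. So `Φ` is monotone and bounded, its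
increments tend to `0`, and therefore so does the gap between the logarithms of the Nash products.
-/

open Finset

open Filter Topology

section NashDynamics

variable {A N : Type*} [Fintype A] [Fintype N]

/-- The partial derivative at `δ`, in the direction of project `x`, of the logarithm of the Nash
product; it is also the factor by which the dynamics multiplies `δ x`. -/
noncomputable def logGradient (u : N → A → ℝ) (C : N → ℝ) (δ : A → ℝ) (x : A) : ℝ :=
  ∑ i, C i * (u i x / util (u i) δ)

lemma util_nonneg_s6 {v d : A → ℝ} (hv : ∀ x, 0 ≤ v x) (hd : ∀ x, 0 ≤ d x) : 0 ≤ util v d :=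
  Finset.sum_nonneg fun x _ => mul_nonneg (hd x) (hv x)

lemma nashProduct_eq_exp {u : N → A → ℝ} {C : N → ℝ} {d : A → ℝ}
    (h : ∀ i, 0 < util (u i) d) :
    nashProduct u C d = Real.exp (∑ i, C i * Real.log (util (u i) d)) := by
  rw [nashProduct, Real.exp_sum]
  refine Finset.prod_congr rfl fun i _ => ?_
  rw [Real.rpow_def_of_pos (h i), mul_comm]

lemma exists_isNashDistribution [Nonempty A] (u : N → A → ℝ) (C : N → ℝ) (hC : ∀ i, 0 < C i) :
    ∃ d, IsNashDistribution u C d := by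
  classical
  set V := ∑ i, C i with hV
  have hV0 : 0 ≤ V := Finset.sum_nonneg fun i _ => (hC i).le
  have hcompact : IsCompact {d : A → ℝ | IsDistribution d V} := by
    refine (isCompact_univ_pi (fun _ : A => isCompact_Icc (a := (0 : ℝ)) (b := V))).of_isClosed_subset
      ?_ ?_
    · have : {d : A → ℝ | IsDistribution d V}
          = (⋂ x, {d : A → ℝ | 0 ≤ d x}) ∩ {d | ∑ x, d x = V} := by
        ext d; simp [IsDistribution]
      rw [this]
      exact (isClosed_iInter fun x => isClosed_le continuous_const (continuous_apply x)).inter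
        (isClosed_eq (by fun_prop) continuous_const)
    · intro d hd x _
      refine ⟨hd.1 x, ?_⟩
      rw [← hd.2]
      exact Finset.single_le_sum (fun y _ => hd.1 y) (Finset.mem_univ x)
  have hne : {d : A → ℝ | IsDistribution d V}.Nonempty := by
    obtain ⟨a⟩ := ‹Nonempty A›
    refine ⟨Pi.single a V, fun x => ?_, by simp⟩
    by_cases h : x = a
    · subst h; simpa using hV0
    · simp [h]
  have hcont : Continuous (nashProduct u C : (A → ℝ) → ℝ) := by
    unfold nashProduct
    refine continuous_finsetProd _ fun i _ => Continuous.rpow_const ?_ fun _ => Or.inr (hC i).le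
    unfold util
    fun_prop
  obtain ⟨d, hd, hmax⟩ := hcompact.exists_isMaxOn hne hcont.continuousOn
  exact ⟨d, hd, fun d' hd' => hmax hd'⟩

lemma sum_mul_logGradient {u : N → A → ℝ} {C : N → ℝ} {d : A → ℝ}
    (h : ∀ i, 0 < util (u i) d) : ∑ x, d x * logGradient u C d x = ∑ i, C i := by
  simp_rw [logGradient, Finset.mul_sum]
  rw [Finset.sum_comm]
  refine Finset.sum_congr rfl fun i _ => ?_
  have : ∀ x, d x * (C i * (u i x / util (u i) d)) = (C i / util (u i) d) * (d x * u i x) := by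
    intro x; ring
  simp_rw [this]
  rw [← Finset.mul_sum]
  exact div_mul_cancel₀ _ (h i).ne'

/-- First-order optimality: moving a maximizer `d` towards the point mass at `x` does not increase
the Nash product, so the gradient in direction `x` is at most its average `1` under `d`. -/
lemma gradient_le_one {u : N → A → ℝ} {C : N → ℝ} {d : A → ℝ} (hu : ∀ i x, 0 ≤ u i x)
    (hC : ∀ i, 0 < C i) (hd : IsNashDistribution u C d) (h : ∀ i, 0 < util (u i) d)
    (hV : 0 < ∑ i, C i) (x : A) : logGradient u C d x ≤ 1 := by
  classical
  set V := ∑ i, C i with hVdef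
  -- `a i` is the relative change of agent `i`'s utility when all of `V` is moved to `x`.
  set a : N → ℝ := fun i => (V * u i x - util (u i) d) / util (u i) d with ha
  have ha1 : ∀ i, -1 ≤ a i := by
    intro i
    rw [ha]
    simp only
    rw [le_div_iff₀ (h i)]
    have := mul_nonneg hV.le (hu i x)
    linarith
  have hpos : ∀ t : ℝ, 0 < t → t < 1 → ∀ i, 0 < 1 + t * a i := by
    intro t ht ht1 i
    nlinarith [ha1 i]
  have key : ∀ t : ℝ, 0 < t → t < 1 → ∑ i, C i * (a i / (1 + t * a i)) ≤ 0 := by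
    intro t ht ht1
    set e : A → ℝ := fun y => (1 - t) * d y + t * (Pi.single x V : A → ℝ) y with he
    have hsingle : ∀ y, 0 ≤ (Pi.single x V : A → ℝ) y := by
      intro y
      by_cases hy : y = x
      · subst hy; simpa using hV.le
      · simp [hy]
    have hed : IsDistribution e V := by
      refine ⟨fun y => add_nonneg (mul_nonneg (by linarith) (hd.1.1 y))
        (mul_nonneg ht.le (hsingle y)), ?_⟩
      rw [he, Finset.sum_add_distrib, ← Finset.mul_sum, ← Finset.mul_sum, hd.1.2]
      simp
      ring
    have hue : ∀ i, util (u i) e = util (u i) d * (1 + t * a i) := by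
      intro i
      have h1 : util (u i) e = (1 - t) * util (u i) d + t * (V * u i x) := by
        unfold util
        simp only [he, add_mul, Finset.sum_add_distrib, mul_assoc, ← Finset.mul_sum]
        congr 2
        rw [Finset.sum_eq_single x]
        · simp
        · intro y _ hy; simp [hy]
        · simp
      have h2 : util (u i) d * a i = V * u i x - util (u i) d := by
        rw [ha]; exact mul_div_cancel₀ _ (h i).ne'
      rw [h1]
      linear_combination (-t) * h2
    have hle := hd.2 e hed
    rw [nashProduct_eq_exp h, nashProduct_eq_exp (d := e)
      (fun i => by rw [hue]; exact mul_pos (h i) (hpos t ht ht1 i)), Real.exp_le_exp] at hle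
    have hsum : ∑ i, C i * (t * (a i / (1 + t * a i))) ≤
        ∑ i, C i * (Real.log (util (u i) e) - Real.log (util (u i) d)) := by
      refine Finset.sum_le_sum fun i _ => mul_le_mul_of_nonneg_left ?_ (hC i).le
      have hp := hpos t ht ht1 i
      rw [hue, Real.log_mul (h i).ne' hp.ne', add_sub_cancel_left]
      have := Real.one_sub_inv_le_log_of_pos hp
      refine le_trans (le_of_eq ?_) this
      field_simp
      ring
    simp_rw [mul_sub, Finset.sum_sub_distrib] at hsum
    have h3 : ∑ i, C i * (t * (a i / (1 + t * a i))) = t * ∑ i, C i * (a i / (1 + t * a i)) := by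
      rw [Finset.mul_sum]
      exact Finset.sum_congr rfl fun i _ => by ring
    rw [h3] at hsum
    exact nonpos_of_mul_nonpos_right (by linarith) ht
  have hlim : Tendsto (fun t : ℝ => ∑ i, C i * (a i / (1 + t * a i))) (𝓝[>] 0)
      (𝓝 (∑ i, C i * a i)) := by
    refine tendsto_finsetSum _ fun i _ => Tendsto.const_mul _ ?_
    have : ContinuousAt (fun t : ℝ => a i / (1 + t * a i)) 0 := by
      refine ContinuousAt.div (by fun_prop) (by fun_prop) (by simp)
    simpa using this.tendsto.mono_left nhdsWithin_le_nhds
  have hfin : ∑ i, C i * a i ≤ 0 := by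
    refine le_of_tendsto hlim ?_
    filter_upwards [Ioo_mem_nhdsGT (zero_lt_one' ℝ)] with t ht
    exact key t ht.1 ht.2
  have hrew : ∑ i, C i * a i = V * logGradient u C d x - V := by
    rw [logGradient, Finset.mul_sum, hVdef, ← Finset.sum_sub_distrib, ← hVdef]
    refine Finset.sum_congr rfl fun i _ => ?_
    have := (h i).ne'
    simp only [ha]
    field_simp
  rw [hrew] at hfin
  exact le_of_mul_le_mul_left (by linarith) hV

lemma gradient_eq_one {u : N → A → ℝ} {C : N → ℝ} {d : A → ℝ} (hu : ∀ i x, 0 ≤ u i x)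
    (hC : ∀ i, 0 < C i) (hd : IsNashDistribution u C d) (h : ∀ i, 0 < util (u i) d)
    (hV : 0 < ∑ i, C i) (x : A) (hx : 0 < d x) : logGradient u C d x = 1 := by
  have hle := gradient_le_one hu hC hd h hV
  have hnn : ∀ y ∈ Finset.univ, 0 ≤ d y * (1 - logGradient u C d y) := fun y _ =>
    mul_nonneg (hd.1.1 y) (sub_nonneg.2 (hle y))
  have hsum : ∑ y, d y * (1 - logGradient u C d y) = 0 := by
    simp_rw [mul_sub, mul_one, Finset.sum_sub_distrib]
    rw [sum_mul_logGradient h, hd.1.2, sub_self]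
  have := (Finset.sum_eq_zero_iff_of_nonneg hnn).1 hsum x (Finset.mem_univ x)
  rcases mul_eq_zero.1 this with h' | h'
  · exact absurd h' hx.ne'
  · linarith

/-- Jensen's inequality at each `x` in the support of the maximizer `d`, with weights
`C i * u i x / util (u i) d`, averaged over `d`. -/
lemma log_gap_le {u : N → A → ℝ} {C : N → ℝ} {d e : A → ℝ} (hu : ∀ i x, 0 ≤ u i x)
    (hC : ∀ i, 0 < C i) (hd : IsNashDistribution u C d) (h : ∀ i, 0 < util (u i) d)
    (hV : 0 < ∑ i, C i) (he : ∀ i, 0 < util (u i) e) :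
    ∑ i, C i * (Real.log (util (u i) d) - Real.log (util (u i) e)) ≤
      ∑ x, d x * Real.log (logGradient u C e x) := by
  have hpt : ∀ x, d x * ∑ i, C i * (u i x / util (u i) d) *
      (Real.log (util (u i) d) - Real.log (util (u i) e)) ≤
      d x * Real.log (logGradient u C e x) := by
    intro x
    rcases (hd.1.1 x).eq_or_lt with hx | hx
    · simp [← hx]
    refine mul_le_mul_of_nonneg_left ?_ hx.le
    have hJ := strictConcaveOn_log_Ioi.concaveOn.le_map_sum (t := Finset.univ)
      (w := fun i => C i * (u i x / util (u i) d)) (p := fun i => util (u i) d / util (u i) e)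
      (fun i _ => mul_nonneg (hC i).le (div_nonneg (hu i x) (h i).le))
      (gradient_eq_one hu hC hd h hV x hx) (fun i _ => div_pos (h i) (he i))
    simp only [smul_eq_mul] at hJ
    have h1 : ∑ i, C i * (u i x / util (u i) d) * (util (u i) d / util (u i) e) =
        logGradient u C e x := by
      refine Finset.sum_congr rfl fun i _ => ?_
      have := (h i).ne'
      field_simp
    rw [h1] at hJ
    refine le_trans (le_of_eq ?_) hJ
    refine Finset.sum_congr rfl fun i _ => ?_
    rw [Real.log_div (h i).ne' (he i).ne']
  refine le_trans (le_of_eq ?_) (Finset.sum_le_sum fun x _ => hpt x)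
  simp_rw [Finset.mul_sum]
  rw [Finset.sum_comm]
  refine Finset.sum_congr rfl fun i _ => ?_
  set g := Real.log (util (u i) d) - Real.log (util (u i) e)
  have : ∀ x, d x * (C i * (u i x / util (u i) d) * g) =
      (C i * g / util (u i) d) * (d x * u i x) := by
    intro x; ring
  simp_rw [this]
  rw [← Finset.mul_sum]
  exact (div_mul_cancel₀ _ (h i).ne').symm

lemma logGradient_pos {u : N → A → ℝ} {C : N → ℝ} {e : A → ℝ} (hu : ∀ i x, 0 ≤ u i x)
    (hC : ∀ i, 0 < C i) (he : ∀ i, 0 < util (u i) e) {x : A} (hx : ∃ i, 0 < u i x) :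
    0 < logGradient u C e x := by
  obtain ⟨i, hi⟩ := hx
  exact Finset.sum_pos' (fun j _ => mul_nonneg (hC j).le (div_nonneg (hu j x) (he j).le))
    ⟨i, Finset.mem_univ i, mul_pos (hC i) (div_pos hi (he i))⟩

lemma util_pos_of_support {v d : A → ℝ} (hv : ∀ x, 0 ≤ v x) (hd : ∀ x, 0 ≤ d x) {x : A}
    (hx : 0 < v x) (hdx : 0 < d x) : 0 < util v d :=
  Finset.sum_pos' (fun y _ => mul_nonneg (hd y) (hv y)) ⟨x, Finset.mem_univ x, mul_pos hdx hx⟩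

/-- Invariants of the dynamics: distributions are mapped to distributions, and every project that
some agent finds acceptable keeps a positive share. The share of a project acceptable to nobody
drops to `0` after one step. -/
lemma dynamics_invariant {u : N → A → ℝ} {C : N → ℝ} {δ : ℕ → A → ℝ} (hu : ∀ i x, 0 ≤ u i x)
    (hC : ∀ i, 0 < C i) (hacc : ∀ i, ∃ x, 0 < u i x)
    (h0 : IsDistribution (δ 0) (∑ i, C i)) (h0pos : ∀ x, 0 < δ 0 x)
    (hrec : ∀ k x, δ (k + 1) x = logGradient u C (δ k) x * δ k x) (k : ℕ) :
    IsDistribution (δ k) (∑ i, C i) ∧ (∀ x, (∃ i, 0 < u i x) → 0 < δ k x) ∧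
      ∀ i, 0 < util (u i) (δ k) := by
  suffices H : IsDistribution (δ k) (∑ i, C i) ∧ ∀ x, (∃ i, 0 < u i x) → 0 < δ k x by
    refine ⟨H.1, H.2, fun i => ?_⟩
    obtain ⟨x, hx⟩ := hacc i
    exact util_pos_of_support (hu i) H.1.1 hx (H.2 x ⟨i, hx⟩)
  induction k with
  | zero => exact ⟨h0, fun x _ => h0pos x⟩
  | succ k ih =>
    have hpos : ∀ i, 0 < util (u i) (δ k) := by
      intro i
      obtain ⟨x, hx⟩ := hacc i
      exact util_pos_of_support (hu i) ih.1.1 hx (ih.2 x ⟨i, hx⟩)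
    refine ⟨⟨fun x => ?_, ?_⟩, fun x hx => ?_⟩
    · rw [hrec]
      exact mul_nonneg (Finset.sum_nonneg fun i _ =>
        mul_nonneg (hC i).le (div_nonneg (hu i x) (hpos i).le)) (ih.1.1 x)
    · rw [← sum_mul_logGradient (C := C) hpos]
      exact Finset.sum_congr rfl fun x _ => by rw [hrec, mul_comm]
    · rw [hrec]
      exact mul_pos (logGradient_pos hu hC hpos hx) (ih.2 x hx)

end NashDynamics

theorem nash_dynamics_value_converges {A N : Type*}
    [Fintype A] [Nonempty A] [Fintype N]
    (u : N → A → ℝ) (hu : ∀ i x, 0 ≤ u i x)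
    (C : N → ℝ) (hC : ∀ i, 0 < C i)
    (hacc : ∀ i, ∃ x, 0 < u i x)
    (δ : ℕ → A → ℝ)
    (h0 : IsDistribution (δ 0) (∑ i, C i)) (h0pos : ∀ x, 0 < δ 0 x)
    (hrec : ∀ k x, δ (k + 1) x = ∑ i, C i * (u i x / util (u i) (δ k)) * δ k x) :
    ∃ M : ℝ, IsGreatest {p : ℝ | ∃ d : A → ℝ, IsDistribution d (∑ i, C i) ∧
        nashProduct u C d = p} M ∧
      Tendsto (fun k => nashProduct u C (δ k)) atTop (𝓝 M) := by
  obtain ⟨d, hd⟩ := exists_isNashDistribution u C hC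
  refine ⟨nashProduct u C d, ⟨⟨d, hd.1, rfl⟩, ?_⟩, ?_⟩
  · rintro _ ⟨e, he, rfl⟩
    exact hd.2 e he
  have hV : 0 < ∑ i, C i := by
    rw [← h0.2]
    exact Finset.sum_pos (fun x _ => h0pos x) Finset.univ_nonempty
  have hrec' : ∀ k x, δ (k + 1) x = logGradient u C (δ k) x * δ k x := by
    intro k x
    rw [hrec, logGradient, Finset.sum_mul]
  have hinv := dynamics_invariant hu hC hacc h0 h0pos hrec'
  have hk : ∀ k i, 0 < util (u i) (δ k) := fun k => (hinv k).2.2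
  have hdpos : ∀ i, 0 < util (u i) d := by
    intro i
    refine lt_of_le_of_ne (util_nonneg_s6 (hu i) hd.1.1) fun h => ?_
    have h1 : nashProduct u C d = 0 :=
      Finset.prod_eq_zero (Finset.mem_univ i) (by rw [← h, Real.zero_rpow (hC i).ne'])
    have h2 := hd.2 _ h0
    rw [h1, nashProduct_eq_exp (hk 0)] at h2
    exact absurd h2 (not_le.2 (Real.exp_pos _))
  -- A project in the support of `d` has positive gradient, so some agent finds it acceptable.
  have hsupp : ∀ x, 0 < d x → ∃ i, 0 < u i x := by
    intro x hx
    by_contra! hcon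
    have hz : ∀ i, u i x = 0 := fun i => le_antisymm (hcon i) (hu i x)
    have h1 := gradient_eq_one hu hC hd hdpos hV x hx
    simp [logGradient, hz] at h1
  set L : (A → ℝ) → ℝ := fun e => ∑ i, C i * Real.log (util (u i) e) with hL
  set Φ : ℕ → ℝ := fun k => ∑ x, d x * Real.log (δ k x) with hΦ
  have hstep : ∀ k, L d - L (δ k) ≤ Φ (k + 1) - Φ k := by
    intro k
    have h1 := log_gap_le hu hC hd hdpos hV (hk k)
    simp_rw [mul_sub, Finset.sum_sub_distrib] at h1
    refine h1.trans (le_of_eq ?_)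
    simp only [hΦ]
    rw [← Finset.sum_sub_distrib]
    refine Finset.sum_congr rfl fun x _ => ?_
    rcases (hd.1.1 x).eq_or_lt with hx | hx
    · simp [← hx]
    · rw [hrec', Real.log_mul (logGradient_pos hu hC (hk k) (hsupp x hx)).ne'
        ((hinv k).2.1 x (hsupp x hx)).ne']
      ring
  have hgap : ∀ k, 0 ≤ L d - L (δ k) := by
    intro k
    have h1 := hd.2 _ (hinv k).1
    rw [nashProduct_eq_exp (hk k), nashProduct_eq_exp hdpos, Real.exp_le_exp] at h1
    exact sub_nonneg.2 h1
  have hmono : Monotone Φ := monotone_nat_of_le_succ fun k => by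
    linarith [hstep k, hgap k]
  have hbdd : BddAbove (Set.range Φ) := by
    refine ⟨∑ x, d x * ∑ i, C i, ?_⟩
    rintro _ ⟨k, rfl⟩
    refine Finset.sum_le_sum fun x _ => mul_le_mul_of_nonneg_left ?_ (hd.1.1 x)
    have hnn := (hinv k).1.1
    refine (Real.log_le_self (hnn x)).trans ?_
    rw [← (hinv k).1.2]
    exact Finset.single_le_sum (fun y _ => hnn y) (Finset.mem_univ x)
  have hconv := tendsto_atTop_ciSup hmono hbdd
  have hdiff : Tendsto (fun k => Φ (k + 1) - Φ k) atTop (𝓝 0) := by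
    simpa using (hconv.comp (tendsto_add_atTop_nat 1)).sub hconv
  have hgap0 : Tendsto (fun k => L d - L (δ k)) atTop (𝓝 0) :=
    squeeze_zero hgap hstep hdiff
  have hLlim : Tendsto (fun k => L (δ k)) atTop (𝓝 (L d)) := by
    simpa using (tendsto_const_nhds (x := L d)).sub hgap0
  rw [nashProduct_eq_exp hdpos]
  simp_rw [fun k => nashProduct_eq_exp (C := C) (hk k)]
  exact (Real.continuous_exp.tendsto _).comp hLlim
end

section
/- Suppose C is a contribution profile with C_i > 0 for all i ∈ N, Σ_{i∈N} C_i = 1, and every agent has at least one acceptable project. Let δ ∈ Δ(1) satisfy δ(x) > 0 for all x ∈ A, and define δ'(x) = Σ_{i∈N} C_i · (u_i(x)/u_i(δ)) · δ(x) for all x ∈ A. Then Σ_{i∈N} C_i · (ln u_i(δ') − ln u_i(δ)) ≥ (1/2) · (Σ_{x∈A} |δ'(x) − δ(x)|)² ≥ 0, where ln denotes the natural logarithm. -/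
/-! Write `r x = δ' x / δ x` and `w i x = δ x * u i x / util (u i) δ`. For each agent `i` the weights
`w i` sum to one, and `util (u i) δ' / util (u i) δ` is the `w i`-average of `r`. Jensen's inequality
for `log` (`sum_mul_log_le_log_sum`) therefore gives
`log (util (u i) δ') - log (util (u i) δ) ≥ ∑ x, w i x * log (r x)`. Since `∑ i, C i * w i x = δ' x`,
averaging over the agents bounds the left side of the claim below by the Kullback–Leibler divergence
`∑ x, δ' x * log (δ' x / δ x)`, and Pinsker's inequality (`pinsker_finite`) finishes the proof.

Pinsker's inequality follows by Cauchy–Schwarz from the scalar bound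
`3 (t - 1)² ≤ (2 t + 4) (t log t - t + 1)` for `t ≥ 0`. -/

open Finset

/-- The derivative of `log t - (5t² - 4t - 1) / (2t² + 4t)` is `(t - 1)³ / (t (t + 2))²`, so its
minimum over `t > 0` is the value `0` at `t = 1`. -/
lemma rational_le_log {t : ℝ} (ht : 0 < t) :
    (5 * t ^ 2 - 4 * t - 1) / (2 * t ^ 2 + 4 * t) ≤ Real.log t := by
  set g : ℝ → ℝ := fun s => Real.log s - (5 * s ^ 2 - 4 * s - 1) / (2 * s ^ 2 + 4 * s) with hg
  have hd : ∀ s : ℝ, 0 < s → HasDerivAt g ((s - 1) ^ 3 / (s * (s + 2)) ^ 2) s := by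
    intro s hs
    have hne : 2 * s ^ 2 + 4 * s ≠ 0 := by positivity
    have h1 : HasDerivAt (fun s : ℝ => 5 * s ^ 2 - 4 * s - 1) (10 * s - 4) s := by
      have := ((((hasDerivAt_id s).pow 2).const_mul 5).sub
        ((hasDerivAt_id s).const_mul 4)).sub_const 1
      exact this.congr_deriv (by simp; ring)
    have h2 : HasDerivAt (fun s : ℝ => 2 * s ^ 2 + 4 * s) (4 * s + 4) s := by
      have := (((hasDerivAt_id s).pow 2).const_mul 2).add ((hasDerivAt_id s).const_mul 4)
      exact this.congr_deriv (by simp; ring)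
    have h3 := (Real.hasDerivAt_log hs.ne').sub (h1.div h2 hne)
    refine h3.congr_deriv ?_
    have : s + 2 ≠ 0 := by positivity
    have e : 2 * s ^ 2 + 4 * s = 2 * (s * (s + 2)) := by ring
    rw [e]
    field_simp
    ring
  have hg1 : g 1 = 0 := by simp [hg]; norm_num
  suffices h : g 1 ≤ g t by
    rw [hg1] at h
    simp only [hg] at h
    linarith
  rcases le_total t 1 with h | h
  · have hanti : AntitoneOn g (Set.Icc t 1) := by
      refine antitoneOn_of_deriv_nonpos (convex_Icc _ _)
        (fun s hs => (hd s (ht.trans_le hs.1)).continuousAt.continuousWithinAt)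
        (fun s hs => ?_) (fun s hs => ?_)
      all_goals rw [interior_Icc] at hs
      · exact (hd s (ht.trans hs.1)).differentiableAt.differentiableWithinAt
      · rw [(hd s (ht.trans hs.1)).deriv]
        refine div_nonpos_of_nonpos_of_nonneg ?_ (sq_nonneg _)
        have : s - 1 ≤ 0 := by linarith [hs.2]
        exact Odd.pow_nonpos (by decide) this
    exact hanti ⟨le_rfl, h⟩ ⟨h, le_rfl⟩ h
  · have hmono : MonotoneOn g (Set.Icc 1 t) := by
      refine monotoneOn_of_deriv_nonneg (convex_Icc _ _)
        (fun s hs => (hd s (one_pos.trans_le hs.1)).continuousAt.continuousWithinAt)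
        (fun s hs => ?_) (fun s hs => ?_)
      all_goals rw [interior_Icc] at hs
      · exact (hd s (one_pos.trans hs.1)).differentiableAt.differentiableWithinAt
      · rw [(hd s (one_pos.trans hs.1)).deriv]
        have : 0 ≤ s - 1 := by linarith [hs.1]
        positivity
    exact hmono ⟨le_rfl, h⟩ ⟨h, le_rfl⟩ h

lemma three_mul_sub_one_sq_le {t : ℝ} (ht : 0 ≤ t) :
    3 * (t - 1) ^ 2 ≤ (2 * t + 4) * (t * Real.log t - t + 1) := by
  rcases ht.eq_or_lt with rfl | ht
  · norm_num
  · have h := rational_le_log ht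
    rw [div_le_iff₀ (by positivity)] at h
    nlinarith

/-- Pinsker's inequality on a finite type, with `q` of full support. Where `p x = 0` the summand
`p x * log (p x / q x)` is `0`, the usual convention. -/
lemma pinsker_finite {A : Type*} [Fintype A] (p q : A → ℝ) (hp : ∀ x, 0 ≤ p x)
    (hq : ∀ x, 0 < q x) (hps : ∑ x, p x = 1) (hqs : ∑ x, q x = 1) :
    (1 / 2) * (∑ x, |p x - q x|) ^ 2 ≤ ∑ x, p x * Real.log (p x / q x) := by
  have key : ∀ x, 3 * (p x - q x) ^ 2 ≤
      (2 * p x + 4 * q x) * (p x * Real.log (p x / q x) - p x + q x) := by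
    intro x
    have hqx := hq x
    have h := three_mul_sub_one_sq_le (div_nonneg (hp x) hqx.le)
    have h2 := mul_le_mul_of_nonneg_left h (sq_nonneg (q x))
    have e : p x = q x * (p x / q x) := by field_simp
    generalize p x / q x = t at *
    rw [e]
    linarith
  have hcs := Finset.sum_sq_le_sum_mul_sum_of_sq_le_mul (s := Finset.univ)
    (r := fun x => |p x - q x|) (f := fun x => (2 * p x + 4 * q x) / 3)
    (g := fun x => p x * Real.log (p x / q x) - p x + q x)
    (fun x _ => by have := hp x; have := hq x; positivity)
    (fun x _ => by
      have := hp x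
      have := hq x
      have hk : 0 ≤ (2 * p x + 4 * q x) * (p x * Real.log (p x / q x) - p x + q x) :=
        le_trans (by positivity) (key x)
      exact nonneg_of_mul_nonneg_right hk (by positivity))
    (fun x _ => by
      rw [sq_abs]
      linarith [key x])
  have h1 : ∑ x, (2 * p x + 4 * q x) / 3 = 2 := by
    rw [← Finset.sum_div, Finset.sum_add_distrib, ← Finset.mul_sum, ← Finset.mul_sum, hps, hqs]
    norm_num
  have h2 : ∑ x, (p x * Real.log (p x / q x) - p x + q x) = ∑ x, p x * Real.log (p x / q x) := by
    rw [Finset.sum_add_distrib, Finset.sum_sub_distrib, hps, hqs]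
    ring
  rw [h1, h2] at hcs
  linarith

/-- Jensen's inequality for `log`. The points `r x` need only be positive where the weight `w x` is
nonzero: elsewhere the value of `log (r x)` does not matter. -/
lemma sum_mul_log_le_log_sum {A : Type*} [Fintype A] (w r : A → ℝ) (hw : ∀ x, 0 ≤ w x)
    (hws : ∑ x, w x = 1) (hr : ∀ x, 0 < w x → 0 < r x) :
    0 < ∑ x, w x * r x ∧ ∑ x, w x * Real.log (r x) ≤ Real.log (∑ x, w x * r x) := by
  have hm : 0 < ∑ x, w x * r x := by
    obtain ⟨x, -, hx⟩ : ∃ x ∈ Finset.univ, 0 < w x := by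
      by_contra! hcon
      linarith [Finset.sum_nonpos hcon]
    refine Finset.sum_pos' (fun y _ => ?_) ⟨x, Finset.mem_univ _, mul_pos hx (hr x hx)⟩
    rcases (hw y).eq_or_lt with h | h
    · simp [← h]
    · exact (mul_pos h (hr y h)).le
  refine ⟨hm, ?_⟩
  set m := ∑ x, w x * r x with hmdef
  -- The tangent line of `log` at the mean `m`.
  have h : ∀ x, w x * Real.log (r x) ≤ w x * Real.log m + w x * r x / m - w x := by
    intro x
    rcases (hw x).eq_or_lt with h | h
    · simp [← h]
    · have hl := Real.log_le_sub_one_of_pos (div_pos (hr x h) hm)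
      rw [Real.log_div (hr x h).ne' hm.ne'] at hl
      have := mul_le_mul_of_nonneg_left hl h.le
      rw [mul_div_assoc]
      linarith
  calc ∑ x, w x * Real.log (r x) ≤ ∑ x, (w x * Real.log m + w x * r x / m - w x) :=
        Finset.sum_le_sum fun x _ => h x
    _ = Real.log m := by
        rw [Finset.sum_sub_distrib, Finset.sum_add_distrib, ← Finset.sum_mul, ← Finset.sum_div,
          hws, ← hmdef, div_self hm.ne']
        ring

theorem nash_dynamics_step_inequality {A N : Type*}
    [Fintype A] [Nonempty A] [Fintype N]
    (u : N → A → ℝ) (hu : ∀ i x, 0 ≤ u i x)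
    (C : N → ℝ) (hC : ∀ i, 0 < C i) (hCsum : ∑ i, C i = 1)
    (hacc : ∀ i, ∃ x, 0 < u i x)
    (δ : A → ℝ) (hδ : IsDistribution δ 1) (hpos : ∀ x, 0 < δ x)
    (δ' : A → ℝ) (hδ' : ∀ x, δ' x = ∑ i, C i * (u i x / util (u i) δ) * δ x) :
    (∑ i, C i * (Real.log (util (u i) δ') - Real.log (util (u i) δ))) ≥
        (1 / 2) * (∑ x, |δ' x - δ x|) ^ 2 ∧
      (1 / 2) * (∑ x, |δ' x - δ x|) ^ 2 ≥ 0 := by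
  refine ⟨?_, by positivity⟩
  have hU : ∀ i, 0 < util (u i) δ := by
    intro i
    obtain ⟨x, hx⟩ := hacc i
    exact Finset.sum_pos' (fun y _ => mul_nonneg (hpos y).le (hu i y))
      ⟨x, Finset.mem_univ _, mul_pos (hpos x) hx⟩
  set w : N → A → ℝ := fun i x => δ x * u i x / util (u i) δ with hw
  have hw0 : ∀ i x, 0 ≤ w i x := fun i x =>
    div_nonneg (mul_nonneg (hpos x).le (hu i x)) (hU i).le
  have hws : ∀ i, ∑ x, w i x = 1 := by
    intro i
    rw [← Finset.sum_div]
    exact div_self (hU i).ne'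
  have hmix : ∀ x, δ' x = ∑ i, C i * w i x := by
    intro x
    rw [hδ' x]
    refine Finset.sum_congr rfl fun i _ => ?_
    simp only [hw]
    ring
  have hp0 : ∀ x, 0 ≤ δ' x := by
    intro x
    rw [hmix x]
    exact Finset.sum_nonneg fun i _ => mul_nonneg (hC i).le (hw0 i x)
  have hps : ∑ x, δ' x = 1 := by
    simp_rw [hmix]
    rw [Finset.sum_comm]
    simp_rw [← Finset.mul_sum, hws, mul_one]
    exact hCsum
  have hr : ∀ i x, 0 < w i x → 0 < δ' x / δ x := by
    intro i x hx
    refine div_pos ?_ (hpos x)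
    rw [hmix x]
    exact Finset.sum_pos' (fun j _ => mul_nonneg (hC j).le (hw0 j x))
      ⟨i, Finset.mem_univ _, mul_pos (hC i) hx⟩
  have hmean : ∀ i, ∑ x, w i x * (δ' x / δ x) = util (u i) δ' / util (u i) δ := by
    intro i
    rw [util, Finset.sum_div]
    refine Finset.sum_congr rfl fun x _ => ?_
    have h1 := (hpos x).ne'
    have h2 := (hU i).ne'
    simp only [hw]
    field_simp
  have hJ : ∀ i, ∑ x, w i x * Real.log (δ' x / δ x) ≤
      Real.log (util (u i) δ') - Real.log (util (u i) δ) := by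
    intro i
    obtain ⟨h1, h2⟩ := sum_mul_log_le_log_sum (w i) (fun x => δ' x / δ x) (hw0 i) (hws i) (hr i)
    rw [hmean i] at h1 h2
    have h3 : 0 < util (u i) δ' := (div_pos_iff_of_pos_right (hU i)).1 h1
    rwa [Real.log_div h3.ne' (hU i).ne'] at h2
  calc (1 / 2) * (∑ x, |δ' x - δ x|) ^ 2
      ≤ ∑ x, δ' x * Real.log (δ' x / δ x) := pinsker_finite δ' δ hp0 hpos hps hδ.2
    _ = ∑ x, ∑ i, C i * (w i x * Real.log (δ' x / δ x)) := by
        refine Finset.sum_congr rfl fun x _ => ?_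
        nth_rewrite 1 [hmix x]
        rw [Finset.sum_mul]
        exact Finset.sum_congr rfl fun i _ => mul_assoc _ _ _
    _ = ∑ i, C i * ∑ x, w i x * Real.log (δ' x / δ x) := by
        rw [Finset.sum_comm]
        simp_rw [Finset.mul_sum]
    _ ≤ ∑ i, C i * (Real.log (util (u i) δ') - Real.log (util (u i) δ)) :=
        Finset.sum_le_sum fun i _ => mul_le_mul_of_nonneg_left (hJ i) (hC i).le
end

section
/- (Incompatibility of strong decomposability and efficiency.) Let 0 < ε < 1, let A = {a, b, x} with three distinct projects, let N = {1, 2}, and define u_1(a) = 1+ε, u_1(b) = 0, u_1(x) = 1 and u_2(a) = 0, u_2(b) = 1+ε, u_2(x) = 1. Let C = (1, 1). Then for every δ ∈ Δ(2) that is strongly decomposable with respect to (u, C), there exists δ' ∈ Δ(2) with u_1(δ') > u_1(δ) and u_2(δ') > u_2(δ); hence no distribution in Δ(2) is both strongly decomposable and efficient for this profile. -/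
/-!
Agent 1's unique favourite project is `a = 0` and agent 2's is `b = 1`, so strong decomposability forces
the distribution `(1, 1, 0)`, which gives each agent utility `1 + ε < 2`. Spending the whole pool
on the compromise project `x = 2` gives each agent utility `2`.
-/

open Finset

/-- Strong decomposability: each agent's individual distribution spends only on
her maximum-utility projects. -/
def StronglyDecomposable {A N : Type*} [Fintype A] [Fintype N]
    (u : N → A → ℝ) (C : N → ℝ) (δ : A → ℝ) : Prop :=
  ∃ δi : N → A → ℝ, (∀ i, IsDistribution (δi i) (C i)) ∧
    (∀ x, δ x = ∑ i, δi i x) ∧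
    ∀ i x, 0 < δi i x → ∀ y, u i y ≤ u i x

theorem strong_decomposability_inefficient (ε : ℝ) (hε0 : 0 < ε) (hε1 : ε < 1) :
    ∀ δ : Fin 3 → ℝ, IsDistribution δ 2 →
      StronglyDecomposable (![![1 + ε, 0, 1], ![0, 1 + ε, 1]] : Fin 2 → Fin 3 → ℝ)
        (![1, 1] : Fin 2 → ℝ) δ →
      ∃ δ' : Fin 3 → ℝ, IsDistribution δ' 2 ∧
        util (![1 + ε, 0, 1] : Fin 3 → ℝ) δ < util ![1 + ε, 0, 1] δ' ∧
        util (![0, 1 + ε, 1] : Fin 3 → ℝ) δ < util ![0, 1 + ε, 1] δ' := by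
  rintro δ - ⟨d, hd, hsum, hmax⟩
  have h01 : d 0 1 = 0 := by
    refine le_antisymm (not_lt.mp fun h => ?_) ((hd 0).1 1)
    have := hmax 0 1 h 0
    simp at this
    linarith
  have h02 : d 0 2 = 0 := by
    refine le_antisymm (not_lt.mp fun h => ?_) ((hd 0).1 2)
    have := hmax 0 2 h 0
    simp at this
    linarith
  have h10 : d 1 0 = 0 := by
    refine le_antisymm (not_lt.mp fun h => ?_) ((hd 1).1 0)
    have := hmax 1 0 h 1
    simp at this
    linarith
  have h12 : d 1 2 = 0 := by
    refine le_antisymm (not_lt.mp fun h => ?_) ((hd 1).1 2)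
    have := hmax 1 2 h 1
    simp at this
    linarith
  have h00 : d 0 0 = 1 := by simpa [Fin.sum_univ_three, h01, h02] using (hd 0).2
  have h11 : d 1 1 = 1 := by simpa [Fin.sum_univ_three, h10, h12] using (hd 1).2
  have e0 : δ 0 = 1 := by simp [hsum, Fin.sum_univ_two, h00, h10]
  have e1 : δ 1 = 1 := by simp [hsum, Fin.sum_univ_two, h01, h11]
  have e2 : δ 2 = 0 := by simp [hsum, Fin.sum_univ_two, h02, h12]
  refine ⟨![0, 0, 2], ⟨fun x => ?_, ?_⟩, ?_, ?_⟩
  · fin_cases x <;> simp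
  · simp [Fin.sum_univ_three]
  · simp [util, Fin.sum_univ_three, e0, e1, e2]
    linarith
  · simp [util, Fin.sum_univ_three, e0, e1, e2]
    linarith
end

section
/- (Incompatibility of strong contribution incentive-compatibility and efficiency.) Let 0 < ε < 1/2, let A = {a, b, c, x} with four distinct projects, let N = {1, 2, 3}, and define u_1(a) = 2−ε, u_1(x) = 1, u_1(b) = u_1(c) = 0; u_2(b) = 2−ε, u_2(x) = 1, u_2(a) = u_2(c) = 0; u_3(c) = 2−ε, u_3(x) = 1, u_3(a) = u_3(b) = 0. Then there is no mechanism f assigning to each contribution profile C ∈ [0,1]^3 a distribution f(C) ∈ Δ(C_1 + C_2 + C_3) such that both of the following hold: (efficiency) for every profile C there is no δ' ∈ Δ(C_1 + C_2 + C_3) with u_i(δ') ≥ u_i(f(C)) for all i with C_i > 0 and u_i(δ') > u_i(f(C)) for some i with C_i > 0; and (strong contribution incentive-compatibility) for every i ∈ N, every profile C ∈ [0,1]^3, and every 0 ≤ C'_i ≤ C_i, writing C' for the profile obtained from C by replacing C_i with C'_i, u_i(f(C)) − C_i·(2−ε) ≥ u_i(f(C')) − C'_i·(2−ε). -/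
/-!
Write `M = 2 - ε`, so `3/2 < M < 2`. Project `x` is index `3`, and agent `i` values its own project
`i.castSucc` at `M`, project `x` at `1`, and everything else at `0`.

Suppose exactly the agents `i` and `j` contribute, one unit each. Strong incentive-compatibility,
compared with contributing nothing, gives each of them utility at least `M`. Efficiency forbids
funding both of their own projects, because moving `t` from each of these to `x` changes both
utilities by `(2 - M) t > 0`. Hence one of the two gets its utility from `x` alone, so `x` receives
at least `M` (`x_mass_of_pair`).

The third agent `k` therefore has utility at least `M` without contributing, and at least `2 M > 3`
once it contributes one unit as well. When all three contribute, this holds for every agent, so the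
total utility exceeds `9`. But a budget of `3` yields total utility at most `9`, since one unit spent
on `x` yields `3` and one unit spent elsewhere yields `M < 3`.
-/

open Finset

/-- The utility profile of the instance. -/
def uProfile (ε : ℝ) : Fin 3 → Fin 4 → ℝ :=
  ![![2 - ε, 0, 0, 1], ![0, 2 - ε, 0, 1], ![0, 0, 2 - ε, 1]]

lemma util_uProfile (ε : ℝ) (i : Fin 3) (δ : Fin 4 → ℝ) :
    util (uProfile ε i) δ = δ i.castSucc * (2 - ε) + δ 3 := by
  fin_cases i <;> simp [util, uProfile, Fin.sum_univ_four]

/-- The distribution obtained from `δ` by moving `t` from each of the own projects of agents `i`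
and `j`, assumed distinct, to the common project `3`. -/
noncomputable def shiftToX (δ : Fin 4 → ℝ) (i j : Fin 3) (t : ℝ) : Fin 4 → ℝ := fun y =>
  if y = i.castSucc ∨ y = j.castSucc then δ y - t else if y = 3 then δ y + 2 * t else δ y

lemma sum_shiftToX (δ : Fin 4 → ℝ) {i j : Fin 3} (hij : i ≠ j) (t : ℝ) :
    ∑ y, shiftToX δ i j t y = ∑ y, δ y := by
  fin_cases i <;> fin_cases j <;>
    first
    | exact absurd rfl hij
    | (simp [shiftToX, Fin.sum_univ_four]; ring)

lemma shiftToX_three (δ : Fin 4 → ℝ) (i j : Fin 3) (t : ℝ) :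
    shiftToX δ i j t 3 = δ 3 + 2 * t := by
  fin_cases i <;> fin_cases j <;> simp [shiftToX, Fin.ext_iff]

/-- If `δ` cannot be improved for both `i` and `j`, and both have utility at least `2 - ε`, then
at least `2 - ε` is spent on the common project. -/
lemma x_mass_of_pair {ε V : ℝ} (hε0 : 0 < ε) {δ : Fin 4 → ℝ}
    (hδ : IsDistribution δ V) {i j : Fin 3} (hij : i ≠ j)
    (heff : ∀ δ', IsDistribution δ' V → util (uProfile ε i) δ < util (uProfile ε i) δ' →
      ¬ util (uProfile ε j) δ < util (uProfile ε j) δ')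
    (hi : 2 - ε ≤ util (uProfile ε i) δ) (hj : 2 - ε ≤ util (uProfile ε j) δ) :
    2 - ε ≤ δ 3 := by
  rw [util_uProfile] at hi hj
  by_contra hlt
  have hpos : ∀ l : Fin 3, 2 - ε ≤ δ l.castSucc * (2 - ε) + δ 3 → 0 < δ l.castSucc := by
    intro l hl
    refine lt_of_le_of_ne (hδ.1 _) fun h => hlt ?_
    rw [← h] at hl
    linarith
  set t := min (δ i.castSucc) (δ j.castSucc) with ht
  have ht0 : 0 < t := lt_min (hpos i hi) (hpos j hj)
  have hti : t ≤ δ i.castSucc := min_le_left _ _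
  have htj : t ≤ δ j.castSucc := min_le_right _ _
  have hvi : shiftToX δ i j t i.castSucc = δ i.castSucc - t := by simp [shiftToX]
  have hvj : shiftToX δ i j t j.castSucc = δ j.castSucc - t := by simp [shiftToX]
  refine heff (shiftToX δ i j t) ⟨fun y => ?_, (sum_shiftToX δ hij t).trans hδ.2⟩ ?_ ?_
  · have := hδ.1 y
    unfold shiftToX
    split_ifs with h1 h2
    · rcases h1 with rfl | rfl <;> linarith
    · linarith
    · exact this
  · rw [util_uProfile, util_uProfile, hvi, shiftToX_three]
    nlinarith
  · rw [util_uProfile, util_uProfile, hvj, shiftToX_three]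
    nlinarith

theorem strong_cic_inefficient (ε : ℝ) (hε0 : 0 < ε) (hε1 : ε < 1 / 2) :
    ¬ ∃ f : (Fin 3 → ℝ) → (Fin 4 → ℝ),
      let u : Fin 3 → Fin 4 → ℝ :=
        ![![2 - ε, 0, 0, 1], ![0, 2 - ε, 0, 1], ![0, 0, 2 - ε, 1]]
      (∀ C : Fin 3 → ℝ, (∀ i, C i ∈ Set.Icc (0 : ℝ) 1) →
          IsDistribution (f C) (∑ i, C i)) ∧
      -- efficiency
      (∀ C : Fin 3 → ℝ, (∀ i, C i ∈ Set.Icc (0 : ℝ) 1) →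
          ¬ ∃ δ' : Fin 4 → ℝ, IsDistribution δ' (∑ i, C i) ∧
            (∀ i, 0 < C i → util (u i) (f C) ≤ util (u i) δ') ∧
            (∃ i, 0 < C i ∧ util (u i) (f C) < util (u i) δ')) ∧
      -- strong contribution incentive-compatibility
      (∀ i : Fin 3, ∀ C : Fin 3 → ℝ, (∀ j, C j ∈ Set.Icc (0 : ℝ) 1) →
          ∀ Ci' : ℝ, 0 ≤ Ci' → Ci' ≤ C i →
            util (u i) (f (Function.update C i Ci')) - Ci' * (2 - ε) ≤
              util (u i) (f C) - C i * (2 - ε)) := by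
  rintro ⟨f, hd, he, hc⟩
  change ∀ C : Fin 3 → ℝ, (∀ i, C i ∈ Set.Icc (0 : ℝ) 1) →
    ¬ ∃ δ' : Fin 4 → ℝ, IsDistribution δ' (∑ i, C i) ∧
      (∀ i, 0 < C i → util (uProfile ε i) (f C) ≤ util (uProfile ε i) δ') ∧
      (∃ i, 0 < C i ∧ util (uProfile ε i) (f C) < util (uProfile ε i) δ') at he
  change ∀ i : Fin 3, ∀ C : Fin 3 → ℝ, (∀ j, C j ∈ Set.Icc (0 : ℝ) 1) →
    ∀ Ci' : ℝ, 0 ≤ Ci' → Ci' ≤ C i →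
      util (uProfile ε i) (f (Function.update C i Ci')) - Ci' * (2 - ε) ≤
        util (uProfile ε i) (f C) - C i * (2 - ε) at hc
  have hone : ∀ i : Fin 3, (1 : Fin 3 → ℝ) i ∈ Set.Icc (0 : ℝ) 1 := fun i => by simp
  -- Setting one contribution to zero keeps a profile admissible.
  have hupd : ∀ (C : Fin 3 → ℝ) (k : Fin 3), (∀ i, C i ∈ Set.Icc (0 : ℝ) 1) →
      ∀ i, Function.update C k 0 i ∈ Set.Icc (0 : ℝ) 1 := by
    intro C k hC i
    rcases eq_or_ne i k with rfl | h
    · simp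
    · simpa [h] using hC i
  have hx : ∀ i j k : Fin 3, i ≠ j → i ≠ k → j ≠ k →
      2 - ε ≤ f (Function.update 1 k 0) 3 := by
    intro i j k hij hik hjk
    have hC := hupd 1 k hone
    set C : Fin 3 → ℝ := Function.update 1 k 0 with hCdef
    have hC1 : ∀ l, l ≠ k → C l = 1 := fun l hl => by simp [hCdef, hl]
    have hCk : C k = 0 := by simp [hCdef]
    have hu : ∀ l, l ≠ k → 2 - ε ≤ util (uProfile ε l) (f C) := by
      intro l hl
      have h := hc l C hC 0 le_rfl (hC l).1
      have h0 := (hd _ (hupd C l hC)).1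
      rw [util_uProfile, hC1 l hl] at h
      have := mul_nonneg (h0 l.castSucc) (by linarith : (0 : ℝ) ≤ 2 - ε)
      have := h0 3
      linarith
    refine x_mass_of_pair hε0 (hd C hC) hij (fun δ' hδ' h1 h2 => ?_) (hu i hik) (hu j hjk)
    refine he C hC ⟨δ', hδ', fun l hl => ?_, i, by simp [hC1 i hik], h1⟩
    have hlk : l ≠ k := by
      rintro rfl
      exact absurd hCk hl.ne'
    have : l = i ∨ l = j := by omega
    rcases this with rfl | rfl
    · exact h1.le
    · exact h2.le
  have hfull : ∀ i j k : Fin 3, i ≠ j → i ≠ k → j ≠ k →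
      2 * (2 - ε) ≤ util (uProfile ε k) (f 1) := by
    intro i j k hij hik hjk
    have h := hc k 1 hone 0 le_rfl (hone k).1
    have h0 := (hd _ (hupd 1 k hone)).1 k.castSucc
    have h3 := hx i j k hij hik hjk
    rw [util_uProfile] at h
    simp only [Pi.one_apply] at h
    have := mul_nonneg h0 (by linarith : (0 : ℝ) ≤ 2 - ε)
    linarith
  have h0 := hfull 1 2 0 (by decide) (by decide) (by decide)
  have h1 := hfull 0 2 1 (by decide) (by decide) (by decide)
  have h2 := hfull 0 1 2 (by decide) (by decide) (by decide)
  obtain ⟨hn, hs⟩ := hd 1 hone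
  rw [util_uProfile] at h0 h1 h2
  simp only [Fin.sum_univ_four, Fin.sum_univ_three, Pi.one_apply] at hs
  change _ ≤ f 1 0 * _ + _ at h0
  change _ ≤ f 1 1 * _ + _ at h1
  change _ ≤ f 1 2 * _ + _ at h2
  nlinarith [hn 0, hn 1, hn 2, mul_nonneg (hn 0) hε0.le, mul_nonneg (hn 1) hε0.le,
    mul_nonneg (hn 2) hε0.le]
end

section
/- Let N be a finite set, let C = (C_i)_{i∈N} with C_i ≥ 0 for all i, let x ∈ ℝ^N, and let α, β > 0 be such that Σ_{i∈N} C_i·x_i = 0 and −α ≤ x_i ≤ β for all i ∈ N. Then Σ_{i∈N} C_i·x_i² ≤ α·β·Σ_{i∈N} C_i. -/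
open Finset

theorem weighted_square_bound {N : Type*} [Fintype N]
    (C : N → ℝ) (hC : ∀ i, 0 ≤ C i)
    (x : N → ℝ) (α β : ℝ) (hα : 0 < α) (hβ : 0 < β)
    (hsum : ∑ i, C i * x i = 0)
    (hbound : ∀ i, -α ≤ x i ∧ x i ≤ β) :
    (∑ i, C i * (x i) ^ 2) ≤ α * β * ∑ i, C i := by
  -- Expanding `0 ≤ (x i + α) * (β - x i)` bounds `x i ^ 2` by an affine function of `x i`,
  -- whose linear part vanishes after weighting and summing.
  have key : ∀ i, C i * (x i) ^ 2 ≤ α * β * C i + (β - α) * (C i * x i) := by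
    intro i
    have h : 0 ≤ (x i + α) * (β - x i) :=
      mul_nonneg (by linarith [(hbound i).1]) (by linarith [(hbound i).2])
    linarith [mul_nonneg (hC i) h]
  calc ∑ i, C i * (x i) ^ 2 ≤ ∑ i, (α * β * C i + (β - α) * (C i * x i)) :=
        sum_le_sum fun i _ => key i
    _ = α * β * ∑ i, C i := by
        rw [sum_add_distrib, ← mul_sum, ← mul_sum, hsum, mul_zero, add_zero]
end

section
/- For every μ ∈ (0, 2) there exists ε* ∈ (0, 1) with the following property: for every function Φ : [0, 2] → ℝ, all real numbers α, β ≥ 0, and every ε ∈ (0, ε*), if Φ(1) ≥ Φ(t) for all t ∈ [0, 2] and α·t − (1+ε)·β·t² ≤ Φ(t) ≤ α·t − (1−ε)·β·t² for all t ∈ [0, 2], then α ≥ μ·Φ(1). -/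
/-!
The claim follows by comparing `Φ 1` with `Φ (1 + s)` for a small step `s > 0`. The lower bound
at `1 + s`, the maximality of `Φ 1` and the upper bound at `1` give
`α * s ≤ β * (2 * ε + (1 + ε) * (2 * s + s ^ 2))`, so `α` is at most about `2 * β` when
`ε ≪ s ≪ 1`. Since `Φ 1 ≤ α - (1 - ε) * β`, this makes `Φ 1` at most about `α / 2`.
With `d = 2 - μ`, the choices `s = d / 4` and `ε < d ^ 2 / 64` are small enough.
-/

theorem lin_twice_max (μ : ℝ) (hμ : μ ∈ Set.Ioo (0 : ℝ) 2) :
    ∃ εStar ∈ Set.Ioo (0 : ℝ) 1,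
      ∀ Φ : ℝ → ℝ, ∀ α β : ℝ, 0 ≤ α → 0 ≤ β → ∀ ε ∈ Set.Ioo (0 : ℝ) εStar,
        (∀ t ∈ Set.Icc (0 : ℝ) 2, Φ t ≤ Φ 1) →
        (∀ t ∈ Set.Icc (0 : ℝ) 2,
          α * t - (1 + ε) * β * t ^ 2 ≤ Φ t ∧ Φ t ≤ α * t - (1 - ε) * β * t ^ 2) →
        μ * Φ 1 ≤ α := by
  obtain ⟨h0, h2⟩ := hμ
  obtain ⟨d, rfl⟩ : ∃ d, μ = 2 - d := ⟨2 - μ, by ring⟩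
  have hd : 0 < d := by linarith
  have hd2 : d < 2 := by linarith
  refine ⟨d ^ 2 / 64, ⟨by positivity, by nlinarith⟩, ?_⟩
  rintro Φ α β hα hβ ε ⟨hε, hεd⟩ hmax hΦ
  have hε1 : ε < 1 := by nlinarith
  have hup := (hΦ 1 ⟨by norm_num, by norm_num⟩).2
  have hmem : 1 + d / 4 ∈ Set.Icc (0 : ℝ) 2 := ⟨by linarith, by linarith⟩
  have hlow := (hΦ _ hmem).1.trans (hmax _ hmem)
  have hβε : 0 ≤ (1 - ε) * β := mul_nonneg (by linarith) hβ
  have hμΦ : (2 - d) * Φ 1 ≤ (2 - d) * (α - (1 - ε) * β) :=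
    mul_le_mul_of_nonneg_left (by linarith) h0.le
  rcases le_or_gt 1 d with h | h
  · -- Here `μ ≤ 1`, and `Φ 1 ≤ α` already suffices.
    nlinarith
  · have key : α * (d / 4) ≤ β * (2 * ε + (1 + ε) * (2 * (d / 4) + (d / 4) ^ 2)) := by
      linarith
    have hK : (1 - d) * (2 * ε + (1 + ε) * (2 * (d / 4) + (d / 4) ^ 2))
        ≤ (2 - d) * (1 - ε) * (d / 4) := by
      have hd2' : d ^ 2 ≤ d := by nlinarith
      have hK1 : 2 * ε + (1 + ε) * (2 * (d / 4) + (d / 4) ^ 2)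
          ≤ (2 + d / 2) * (d / 4) := by
        have : ε * (2 * (d / 4) + (d / 4) ^ 2) ≤ ε * 1 :=
          mul_le_mul_of_nonneg_left (by nlinarith) hε.le
        nlinarith
      have hεd' : ε ≤ d / 64 := by linarith
      calc _ ≤ (1 - d) * ((2 + d / 2) * (d / 4)) :=
            mul_le_mul_of_nonneg_left hK1 (by linarith)
        _ = ((1 - d) * (2 + d / 2)) * (d / 4) := by ring
        _ ≤ _ := mul_le_mul_of_nonneg_right (by nlinarith) (by linarith)
    have hfin : (1 - d) * α ≤ (2 - d) * (1 - ε) * β := by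
      refine le_of_mul_le_mul_right ?_ (by linarith : 0 < d / 4)
      have h1 := mul_le_mul_of_nonneg_left key (by linarith : 0 ≤ 1 - d)
      have h3 := mul_le_mul_of_nonneg_left hK hβ
      linarith
    linarith
end

section
/- (Characterization of decomposability.) Let C be a contribution profile and let δ ∈ Δ(|C|). Then δ is decomposable if and only if for every subset S ⊆ N: Σ_{x ∈ A : ∃ i ∈ S with u_i(x) > 0} δ(x) ≥ Σ_{i∈S} C_i. -/
/-!
Necessity is double counting: what the agents of `S` contribute is spent on projects approved by
someone in `S`.

For sufficiency, consider all ways `f` of charging the distribution `δ` to agents who approve of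
the funded projects, ignoring the budgets `C`. This set is compact, and nonempty because Hall's
condition for `S = N` forces every funded project to be approved by someone. Choose `f` minimizing
`∑ i, (r i - C i) ^ 2`, where `r i` is the total charged to agent `i`. If `k` pays for `x` and `j`
approves of `x`, then `r k - C k ≤ r j - C j`, as otherwise moving a little of the charge for `x`
from `k` to `j` decreases the objective (`excess_le_of_minimizer`). Hence, if `T` is the set of
agents with `r i < C i`, every project approved by a member of `T` is paid for by `T` alone, so
these projects receive at most `∑ i ∈ T, r i`. Hall's condition for `T` makes `T` empty, and since
the totals of `r` and `C` agree, `r = C`.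
-/

open Finset

open scoped Classical

/-- Decomposability of a distribution with respect to utilities `u` and profile `C`. -/
def Decomposable {A N : Type*} [Fintype A] [Fintype N]
    (u : N → A → ℝ) (C : N → ℝ) (δ : A → ℝ) : Prop :=
  ∃ δi : N → A → ℝ, (∀ i, IsDistribution (δi i) (C i)) ∧
    (∀ x, δ x = ∑ i, δi i x) ∧
    ∀ i x, 0 < δi i x → 0 < u i x

/-- The ways of charging `δ` to the agents such that nobody pays for a project outside their
relation `R`; the total charged to a single agent is unconstrained. -/
def chargings {A N : Type*} [Fintype N] (R : N → A → Prop) (δ : A → ℝ) : Set (N → A → ℝ) :=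
  {f | (∀ i x, 0 ≤ f i x) ∧ (∀ x, ∑ i, f i x = δ x) ∧ ∀ i x, ¬ R i x → f i x = 0}

/-- The quadratic deviation of the charged amounts from the budgets. -/
def deviation {A N : Type*} [Fintype A] [Fintype N] (C : N → ℝ) (f : N → A → ℝ) : ℝ :=
  ∑ i, (∑ x, f i x - C i) ^ 2

lemma isCompact_chargings {A N : Type*} [Fintype N] (R : N → A → Prop) (δ : A → ℝ) :
    IsCompact (chargings R δ) := by
  have hclosed : IsClosed (chargings R δ) := by
    have hset : chargings R δ = (⋂ i, ⋂ x, {f : N → A → ℝ | 0 ≤ f i x}) ∩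
        ((⋂ x, {f : N → A → ℝ | ∑ i, f i x = δ x}) ∩
          ⋂ i, ⋂ x, ⋂ (_ : ¬ R i x), {f : N → A → ℝ | f i x = 0}) := by
      ext f
      simp [chargings]
    rw [hset]
    refine (isClosed_iInter fun i => isClosed_iInter fun x => ?_).inter
      ((isClosed_iInter fun x => ?_).inter
        (isClosed_iInter fun i => isClosed_iInter fun x => isClosed_iInter fun _ => ?_))
    · exact isClosed_le (by fun_prop) (by fun_prop)
    · exact isClosed_eq (by fun_prop) (by fun_prop)
    · exact isClosed_eq (by fun_prop) (by fun_prop)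
  refine (isCompact_Icc (a := (0 : N → A → ℝ)) (b := fun _ => δ)).of_isClosed_subset hclosed ?_
  rintro f ⟨h0, hs, -⟩
  refine ⟨fun i x => h0 i x, fun i x => ?_⟩
  change f i x ≤ δ x
  rw [← hs x]
  exact single_le_sum (f := fun i => f i x) (fun k _ => h0 k x) (mem_univ i)

/-- At a minimizer, whoever pays for a project is at most as overcharged as anyone who could pay
for it. -/
lemma excess_le_of_minimizer {A N : Type*} [Fintype A] [Fintype N]
    {R : N → A → Prop} {δ : A → ℝ} {C : N → ℝ} {f : N → A → ℝ} (hf : f ∈ chargings R δ)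
    (hmin : ∀ g ∈ chargings R δ, deviation C f ≤ deviation C g)
    {j k : N} {x : A} (hj : R j x) (hk : 0 < f k x) :
    ∑ y, f k y - C k ≤ ∑ y, f j y - C j := by
  by_contra! hlt
  obtain ⟨h0, hs, hR⟩ := hf
  have hjk : j ≠ k := by rintro rfl; exact lt_irrefl _ hlt
  have hkR : R k x := by
    by_contra h
    exact hk.ne' (hR k x h)
  set e : N → ℝ := fun i => ∑ y, f i y - C i with he
  have hlt' : e j < e k := hlt
  -- The amount to move: at most what `k` pays for `x`, and less than the difference in excess.
  obtain ⟨ε, hε, hεf, hεe⟩ : ∃ ε : ℝ, 0 < ε ∧ ε ≤ f k x ∧ ε < e k - e j :=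
    ⟨min (f k x) ((e k - e j) / 2), lt_min hk (by linarith), min_le_left _ _,
      (min_le_right _ _).trans_lt (by linarith)⟩
  let v : N → ℝ := fun i => (if i = j then 1 else 0) - (if i = k then 1 else 0)
  let g : N → A → ℝ := fun i y => f i y + if y = x then ε * v i else 0
  have hvsum : ∑ i, v i = 0 := by simp [v]
  have hg : g ∈ chargings R δ := by
    refine ⟨fun i y => ?_, fun y => ?_, fun i y hn => ?_⟩
    · have := h0 i y
      by_cases hy : y = x
      · subst hy
        by_cases hij : i = j
        · subst hij
          simp only [g, v, if_true, if_neg hjk]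
          linarith
        · by_cases hik : i = k
          · subst hik
            simp only [g, v, if_true, if_neg hij]
            linarith
          · simpa [g, v, hij, hik] using this
      · simpa [g, hy] using this
    · by_cases hy : y = x
      · simp [g, hy, sum_add_distrib, ← mul_sum, hvsum, hs]
      · simp [g, hy, hs]
    · by_cases hy : y = x
      · subst hy
        have hij : i ≠ j := by rintro rfl; exact hn hj
        have hik : i ≠ k := by rintro rfl; exact hn hkR
        simp [g, v, hij, hik, hR i y hn]
      · simp [g, hy, hR i y hn]
  have hdev : deviation C g = deviation C f + 2 * ε * (e j - e k) + 2 * ε ^ 2 := by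
    have hterm : ∀ i, (∑ y, g i y - C i) ^ 2 = (∑ y, f i y - C i) ^ 2
        + 2 * ε * ((if i = j then e i else 0) - (if i = k then e i else 0))
        + ε ^ 2 * ((if i = j then 1 else 0) + (if i = k then 1 else 0)) := by
      intro i
      have hrow : ∑ y, g i y - C i = e i + ε * v i := by
        simp [g, he, sum_add_distrib]
        ring
      rw [hrow]
      change _ = e i ^ 2 + _ + _
      by_cases hij : i = j
      · subst hij
        simp only [v, if_true, if_neg hjk]
        ring
      · by_cases hik : i = k
        · subst hik
          simp only [v, if_true, if_neg hij]
          ring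
        · simp [v, hij, hik]
    unfold deviation
    rw [sum_congr rfl fun i _ => hterm i, sum_add_distrib, sum_add_distrib, ← mul_sum, ← mul_sum,
      sum_sub_distrib, sum_add_distrib]
    simp
    ring
  have := hmin g hg
  nlinarith [mul_pos hε (sub_pos.2 hεe)]

theorem decomposable_iff_hall {A N : Type*} [Fintype A] [Nonempty A] [Fintype N]
    (u : N → A → ℝ) (hu : ∀ i x, 0 ≤ u i x)
    (C : N → ℝ) (hC : ∀ i, 0 ≤ C i)
    (δ : A → ℝ) (hδ : IsDistribution δ (∑ i, C i)) :
    Decomposable u C δ ↔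
      ∀ S : Finset N,
        (∑ i ∈ S, C i) ≤ ∑ x ∈ Finset.univ.filter (fun x => ∃ i ∈ S, 0 < u i x), δ x := by
  constructor
  · rintro ⟨f, hf, hsum, hsupp⟩ S
    calc ∑ i ∈ S, C i
        = ∑ i ∈ S, ∑ x ∈ univ.filter (fun x => ∃ i ∈ S, 0 < u i x), f i x := by
          refine sum_congr rfl fun i hi => ?_
          rw [← (hf i).2]
          refine (sum_subset (subset_univ _) fun x _ hx => ?_).symm
          by_contra hne
          exact hx (mem_filter.2 ⟨mem_univ _, i, hi,
            hsupp i x (lt_of_le_of_ne ((hf i).1 x) (Ne.symm hne))⟩)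
      _ = ∑ x ∈ univ.filter (fun x => ∃ i ∈ S, 0 < u i x), ∑ i ∈ S, f i x := sum_comm
      _ ≤ _ := by
          refine sum_le_sum fun x _ => ?_
          rw [hsum x]
          exact sum_le_univ_sum_of_nonneg fun i => (hf i).1 x
  · intro hall
    have happ : ∀ x, (¬ ∃ i, 0 < u i x) → δ x = 0 := by
      intro x hx
      have h := hall univ
      have hsplit := sum_filter_add_sum_filter_not univ
        (fun x => ∃ i ∈ (univ : Finset N), 0 < u i x) δ
      rw [hδ.2] at hsplit
      have hle : δ x ≤ ∑ y ∈ univ.filter (fun y => ¬ ∃ i ∈ (univ : Finset N), 0 < u i y), δ y :=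
        single_le_sum (fun y _ => hδ.1 y) (by simpa using hx)
      exact le_antisymm (by linarith) (hδ.1 x)
    have hne : (chargings (fun i x => 0 < u i x) δ).Nonempty := by
      -- Charge each project entirely to one agent approving of it.
      refine ⟨fun i x => if h : ∃ i, 0 < u i x then (if i = h.choose then δ x else 0) else 0,
        fun i x => ?_, fun x => ?_, fun i x hn => ?_⟩
      · have := hδ.1 x
        dsimp only
        split_ifs <;> simp [this]
      · by_cases h : ∃ i, 0 < u i x
        · simp [h]
        · simp [h, happ x h]
      · by_cases h : ∃ i, 0 < u i x
        · have : i ≠ h.choose := fun hi => hn (hi ▸ h.choose_spec)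
          simp [h, this]
        · simp [h]
    obtain ⟨f, hf, hmin⟩ := (isCompact_chargings (fun i x => 0 < u i x) δ).exists_isMinOn hne
      (f := deviation C) (by unfold deviation; fun_prop)
    have hex := fun j k x => excess_le_of_minimizer (j := j) (k := k) (x := x) hf
      (fun g hg => hmin hg)
    obtain ⟨h0, hs, hR⟩ := hf
    have hge : ∀ i, C i ≤ ∑ x, f i x := by
      by_contra! hcon
      obtain ⟨i₀, hi₀⟩ := hcon
      set T : Finset N := univ.filter (fun i => ∑ x, f i x < C i) with hT
      have hlt : ∑ i ∈ T, ∑ x, f i x < ∑ i ∈ T, C i :=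
        sum_lt_sum_of_nonempty ⟨i₀, by simpa [hT] using hi₀⟩ fun i hi => (mem_filter.1 hi).2
      have hle : ∑ x ∈ univ.filter (fun x => ∃ i ∈ T, 0 < u i x), δ x
          ≤ ∑ i ∈ T, ∑ x, f i x := by
        rw [sum_comm]
        calc ∑ x ∈ univ.filter (fun x => ∃ i ∈ T, 0 < u i x), δ x
            = ∑ x ∈ univ.filter (fun x => ∃ i ∈ T, 0 < u i x), ∑ i ∈ T, f i x := by
              refine sum_congr rfl fun x hx => ?_
              obtain ⟨-, j, hjT, hj⟩ := mem_filter.1 hx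
              rw [← hs x]
              refine (sum_subset (subset_univ _) fun k _ hk => ?_).symm
              by_contra hne
              have h1 := hex j k x hj (lt_of_le_of_ne (h0 k x) (Ne.symm hne))
              have h2 := (mem_filter.1 hjT).2
              exact hk (mem_filter.2 ⟨mem_univ _, by linarith⟩)
          _ ≤ _ := sum_le_univ_sum_of_nonneg fun x => sum_nonneg fun i _ => h0 i x
      linarith [hall T]
    have htot : ∑ i, C i = ∑ i, ∑ x, f i x := by
      rw [sum_comm, ← hδ.2]
      exact sum_congr rfl fun x _ => (hs x).symm
    have heq := (sum_eq_sum_iff_of_le fun i _ => hge i).1 htot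
    refine ⟨f, fun i => ⟨h0 i, (heq i (mem_univ i)).symm⟩, fun x => (hs x).symm, fun i x hp => ?_⟩
    by_contra hn
    exact hp.ne' (hR i x hn)
end

section
/- (Characterization of strong decomposability.) Let C be a contribution profile and let δ ∈ Δ(|C|). Then δ is strongly decomposable if and only if for every subset S ⊆ N: Σ_{x ∈ A : ∃ i ∈ S with u_i(x) ≥ u_i(y) for all y ∈ A} δ(x) ≥ Σ_{i∈S} C_i. -/
/-!
Necessity is a direct count: the agents in `S` spend only inside their joint neighbourhood
(the projects that are optimal for some member of `S`).

For sufficiency no augmenting paths are needed. Let every agent spend her whole contribution on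
her optimal projects, and among all such plans `f` (a nonempty compact set) take one minimizing
`∑ x, (∑ i, f i x - δ x) ^ 2`. Moving a little of an agent's money from `x` to another of her
optimal projects `y` cannot help, so the excess `∑ i, f i x - δ x` of any project on which she
spends is at most that of `y` (`exists_balanced_plan`). If the largest excess `m` were positive,
let `T` be the projects of excess `m` and `S` the agents spending on some project of `T`.
All optimal projects of agents in `S` lie in `T`, while the money of `S` covers everything spent
on `T`, which exceeds `∑ x ∈ T, δ x`; this contradicts the inequality for `S`. So no excess is
positive, and as the excesses sum to zero they all vanish.
-/

open Finset

open scoped Classical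

/-- The plans in which agent `i` spends exactly `C i`, and only on projects related to her. -/
def spendingPlans {A N : Type*} [Fintype A] (R : N → A → Prop) (C : N → ℝ) : Set (N → A → ℝ) :=
  {f | (∀ i x, 0 ≤ f i x) ∧ (∀ i, ∑ x, f i x = C i) ∧ ∀ i x, ¬ R i x → f i x = 0}

lemma isCompact_spendingPlans {A N : Type*} [Fintype A]
    (R : N → A → Prop) (C : N → ℝ) : IsCompact (spendingPlans R C) := by
  have hK : IsCompact (Set.pi Set.univ fun i : N => Set.pi Set.univ fun _ : A =>
      Set.Icc (0 : ℝ) (C i)) :=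
    isCompact_univ_pi fun i => isCompact_univ_pi fun _ => isCompact_Icc
  refine hK.of_isClosed_subset ?_ ?_
  · have h1 : IsClosed {f : N → A → ℝ | ∀ i x, 0 ≤ f i x} := by
      simp only [Set.ofPred_forall]
      exact isClosed_iInter fun i => isClosed_iInter fun x =>
        isClosed_le continuous_const (by fun_prop)
    have h2 : IsClosed {f : N → A → ℝ | ∀ i, ∑ x, f i x = C i} := by
      simp only [Set.ofPred_forall]
      exact isClosed_iInter fun i => isClosed_eq (by fun_prop) continuous_const
    have h3 : IsClosed {f : N → A → ℝ | ∀ i x, ¬ R i x → f i x = 0} := by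
      simp only [Set.ofPred_forall]
      exact isClosed_iInter fun i => isClosed_iInter fun x => isClosed_iInter fun _ =>
        isClosed_eq (by fun_prop) continuous_const
    exact h1.inter (h2.inter h3)
  · rintro f ⟨h0, h1, -⟩ i - x -
    exact ⟨h0 i x, (h1 i) ▸ Finset.single_le_sum (fun z _ => h0 i z) (Finset.mem_univ x)⟩

/-- A plan minimizing the squared deviation from `δ` is balanced: no agent spends on a project
whose excess is larger than that of another project available to her. -/
lemma exists_balanced_plan {A N : Type*} [Fintype A] [Fintype N] (R : N → A → Prop)
    (hR : ∀ i, ∃ x, R i x) (C : N → ℝ) (hC : ∀ i, 0 ≤ C i) (δ : A → ℝ) :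
    ∃ f ∈ spendingPlans R C, ∀ i x y, 0 < f i x → R i y →
      ∑ j, f j x - δ x ≤ ∑ j, f j y - δ y := by
  have hne : (spendingPlans R C).Nonempty := by
    choose p hp using hR
    refine ⟨fun i x => if x = p i then C i else 0, ?_, ?_, ?_⟩
    · intro i x
      dsimp only
      split_ifs
      exacts [hC i, le_rfl]
    · intro i
      simp
    · intro i x hx
      exact if_neg fun h : x = p i => hx (h ▸ hp i)
  obtain ⟨f, hf, hmin⟩ := (isCompact_spendingPlans R C).exists_isMinOn hne
    (f := fun f => ∑ x, (∑ j, f j x - δ x) ^ 2) (by fun_prop)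
  refine ⟨f, hf, fun i x y hfx hy => ?_⟩
  by_contra! hlt
  obtain ⟨h0, h1, h2⟩ := hf
  have hxy : x ≠ y := by
    rintro rfl
    exact lt_irrefl _ hlt
  have hRx : R i x := by
    by_contra h
    exact hfx.ne' (h2 i x h)
  set a := ∑ j, f j x - δ x with ha
  set b := ∑ j, f j y - δ y with hb
  -- The amount moved from `x` to `y`: available, and smaller than the gap between the excesses.
  obtain ⟨t, ht0, htf, htab⟩ : ∃ t : ℝ, 0 < t ∧ t ≤ f i x ∧ t < a - b :=
    ⟨min (f i x) ((a - b) / 2), lt_min hfx (by linarith), min_le_left _ _,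
      (min_le_right _ _).trans_lt (by linarith)⟩
  let d : A → ℝ := fun z => (if z = y then 1 else 0) - (if z = x then 1 else 0)
  let g : N → A → ℝ := fun j z => f j z + if j = i then t * d z else 0
  have hd : ∑ z, d z = 0 := by simp [d]
  have hg : g ∈ spendingPlans R C := by
    refine ⟨fun j z => ?_, fun j => ?_, fun j z hz => ?_⟩
    · have := h0 j z
      by_cases hj : j = i
      · subst hj
        by_cases hzx : z = x
        · subst hzx
          simp only [g, d, if_true, if_neg hxy]
          linarith
        · have hdz : 0 ≤ d z := by
            simp only [d, if_neg hzx]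
            split_ifs <;> norm_num
          simp only [g, if_true]
          positivity
      · simpa [g, hj] using this
    · by_cases hj : j = i
      · simp [g, hj, Finset.sum_add_distrib, ← Finset.mul_sum, hd, h1]
      · simp [g, hj, h1]
    · by_cases hj : j = i
      · subst hj
        have hzx : z ≠ x := fun h => hz (h ▸ hRx)
        have hzy : z ≠ y := fun h => hz (h ▸ hy)
        simp [g, d, hzx, hzy, h2 j z hz]
      · simp [g, hj, h2 j z hz]
  have hle : ∑ z, (∑ j, f j z - δ z) ^ 2 ≤ ∑ z, (∑ j, g j z - δ z) ^ 2 := hmin hg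
  have hcol : ∀ z, (∑ j, g j z - δ z) ^ 2 = (∑ j, f j z - δ z) ^ 2
      + ((if z = y then 2 * t * (∑ j, f j z - δ z) + t ^ 2 else 0)
        + (if z = x then -2 * t * (∑ j, f j z - δ z) + t ^ 2 else 0)) := by
    intro z
    have hsum : ∑ j, g j z = ∑ j, f j z + t * d z := by
      simp [g, Finset.sum_add_distrib]
    rw [hsum]
    by_cases hzx : z = x
    · have hzy : z ≠ y := fun h => hxy (hzx.symm.trans h)
      simp only [d, if_pos hzx, if_neg hzy]
      ring
    · by_cases hzy : z = y
      · simp only [d, if_neg hzx, if_pos hzy]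
        ring
      · simp only [d, if_neg hzx, if_neg hzy]
        ring
  simp only [hcol, Finset.sum_add_distrib, Finset.sum_ite_eq', Finset.mem_univ, if_true] at hle
  rw [← ha, ← hb] at hle
  nlinarith [mul_pos ht0 (sub_pos.2 htab)]

theorem strongly_decomposable_iff_hall {A N : Type*} [Fintype A] [Nonempty A] [Fintype N]
    (u : N → A → ℝ) (hu : ∀ i x, 0 ≤ u i x)
    (C : N → ℝ) (hC : ∀ i, 0 ≤ C i)
    (δ : A → ℝ) (hδ : IsDistribution δ (∑ i, C i)) :
    StronglyDecomposable u C δ ↔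
      ∀ S : Finset N,
        (∑ i ∈ S, C i) ≤
          ∑ x ∈ Finset.univ.filter (fun x => ∃ i ∈ S, ∀ y, u i y ≤ u i x), δ x := by
  constructor
  · rintro ⟨f, hf, hsum, hsupp⟩ S
    set T := Finset.univ.filter (fun x => ∃ i ∈ S, ∀ y, u i y ≤ u i x) with hT
    calc ∑ i ∈ S, C i = ∑ i ∈ S, ∑ x ∈ T, f i x := by
          refine Finset.sum_congr rfl fun i hi => ?_
          rw [← (hf i).2]
          refine (Finset.sum_subset (Finset.subset_univ T) fun x _ hx => ?_).symm
          by_contra hne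
          refine hx (Finset.mem_filter.2 ⟨Finset.mem_univ x, i, hi, hsupp i x ?_⟩)
          exact lt_of_le_of_ne ((hf i).1 x) (Ne.symm hne)
      _ = ∑ x ∈ T, ∑ i ∈ S, f i x := Finset.sum_comm
      _ ≤ ∑ x ∈ T, δ x := by
          refine Finset.sum_le_sum fun x _ => ?_
          rw [hsum x]
          exact Finset.sum_le_sum_of_subset_of_nonneg (Finset.subset_univ S)
            fun i _ _ => (hf i).1 x
  · intro hall
    obtain ⟨f, ⟨h0, h1, h2⟩, hbal⟩ := exists_balanced_plan (fun i x => ∀ y, u i y ≤ u i x)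
      (fun i => Finite.exists_max (u i)) C hC δ
    obtain ⟨x₀, hx₀⟩ := Finite.exists_max fun x => ∑ j, f j x - δ x
    have hmax : ∑ j, f j x₀ - δ x₀ ≤ 0 := by
      by_contra! hpos
      set m := ∑ j, f j x₀ - δ x₀ with hm
      let T := Finset.univ.filter fun x => ∑ j, f j x - δ x = m
      let S := Finset.univ.filter fun i => ∃ x ∈ T, 0 < f i x
      have hsub : Finset.univ.filter (fun x => ∃ i ∈ S, ∀ y, u i y ≤ u i x) ⊆ T := by
        intro y hy
        obtain ⟨i, hi, hiy⟩ := (Finset.mem_filter.1 hy).2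
        obtain ⟨x, hxT, hfx⟩ := (Finset.mem_filter.1 hi).2
        have hxm := (Finset.mem_filter.1 hxT).2
        exact Finset.mem_filter.2 ⟨Finset.mem_univ y,
          le_antisymm (hx₀ y) (hxm ▸ hbal i x y hfx hiy)⟩
      have hlt : ∑ x ∈ T, δ x < ∑ i ∈ S, C i := by
        calc ∑ x ∈ T, δ x < ∑ x ∈ T, ∑ i, f i x := by
              refine Finset.sum_lt_sum_of_nonempty
                ⟨x₀, Finset.mem_filter.2 ⟨Finset.mem_univ _, rfl⟩⟩ fun x hx => ?_
              have hxm := (Finset.mem_filter.1 hx).2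
              linarith
          _ = ∑ x ∈ T, ∑ i ∈ S, f i x := by
              refine Finset.sum_congr rfl fun x hx => ?_
              refine (Finset.sum_subset (Finset.subset_univ S) fun i _ hi => ?_).symm
              by_contra hne
              exact hi (Finset.mem_filter.2 ⟨Finset.mem_univ i, x, hx,
                lt_of_le_of_ne (h0 i x) (Ne.symm hne)⟩)
          _ = ∑ i ∈ S, ∑ x ∈ T, f i x := Finset.sum_comm
          _ ≤ ∑ i ∈ S, C i := by
              refine Finset.sum_le_sum fun i _ => ?_
              rw [← h1 i]
              exact Finset.sum_le_sum_of_subset_of_nonneg (Finset.subset_univ T)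
                fun x _ _ => h0 i x
      have hsum := Finset.sum_le_sum_of_subset_of_nonneg hsub fun x _ _ => hδ.1 x
      exact absurd (hall S) (not_le.2 (hsum.trans_lt hlt))
    have hle : ∀ x ∈ Finset.univ, ∑ j, f j x ≤ δ x := fun x _ => by
      linarith [hx₀ x]
    have htot : ∑ x, ∑ j, f j x = ∑ x, δ x := by
      rw [Finset.sum_comm, hδ.2]
      exact Finset.sum_congr rfl fun i _ => h1 i
    refine ⟨f, fun i => ⟨h0 i, h1 i⟩, fun x => ?_, fun i x hfx => ?_⟩
    · exact ((Finset.sum_eq_sum_iff_of_le hle).1 htot x (Finset.mem_univ x)).symm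
    · by_contra h
      exact hfx.ne' (h2 i x h)
end
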